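/- arXiv:1305.6162 — 3 statements merged into one kernel-verified Lean document; each statement's English description precedes it below -/
import Mathlib

section
/- There exists a unique basis {H̲_w : w ∈ S_n} of the Hecke algebra H_n consisting of bar-invariant elements such that H̲_w = H_w + Σ_{w' ≺ w} P_{w',w}(q)·H_{w'} with P_{w',w} ∈ q·ℤ[q] for every w' ≺ w. -/
/-!
STATEMENT 0: Existence and uniqueness of the Kazhdan-Lusztig (canonical) basis of the
Hecke algebra `H_n` of the symmetric group `S_n`.

The Hecke algebra is encoded as a `ℂ(q)`-algebra `A` together with a standard basis
`H : Equiv.Perm (Fin n) → A` satisfying the defining properties (`H 1 = 1`,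
`H (w * sᵢ) = H w * H sᵢ` when the length goes up and the quadratic relation), and a
bar involution `bar` which is a ring homomorphism, semilinear with respect to a field
homomorphism `barK` with `barK q = q⁻¹`, and satisfying `bar (H w) = (H w⁻¹)⁻¹`.
-/

open scoped Classical

noncomputable section

abbrev K : Type := RatFunc ℂ

noncomputable def q : K := RatFunc.X

/-- The simple transposition `s_i = (i, i+1)` (0-based) in the symmetric group `S_n`. -/
def s (n : ℕ) (i : Fin (n - 1)) : Equiv.Perm (Fin n) :=
  Equiv.swap ⟨(i : ℕ), by have := i.isLt; omega⟩ ⟨(i : ℕ) + 1, by have := i.isLt; omega⟩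

def wordProd (n : ℕ) (l : List (Fin (n - 1))) : Equiv.Perm (Fin n) :=
  (l.map (s n)).prod

/-- The length of a permutation: minimal length of an expression in simple transpositions. -/
def len (n : ℕ) (w : Equiv.Perm (Fin n)) : ℕ :=
  sInf {k | ∃ l : List (Fin (n - 1)), l.length = k ∧ wordProd n l = w}

/-- Bruhat order on `S_n`: `u ≤ w` iff some reduced expression of `w` admits a subword
which is an expression of `u`. -/
def bruhatLE (n : ℕ) (u w : Equiv.Perm (Fin n)) : Prop :=
  ∃ l : List (Fin (n - 1)), l.length = len n w ∧ wordProd n l = w ∧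
    ∃ t : List (Fin (n - 1)), t.Sublist l ∧ wordProd n t = u

/-- Strict Bruhat order `u ≺ w`. -/
def bruhatLT (n : ℕ) (u w : Equiv.Perm (Fin n)) : Prop :=
  bruhatLE n u w ∧ u ≠ w

/-!
Bruhat order is the transitive closure of multiplication by length-increasing reflections; this is
the exchange condition together with the lifting property. Writing `b_i = H_{s_i} + q`, which is
bar-invariant, and `L_w` for the `ℤ[q]`-lattice spanned by the `H_y` with `y ≺ w`, the product
`H̲_u b_i` is bar-invariant and lies in `H_w + L_w` whenever `w = u s_i` and `u ≺ w`. As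
`ℤ[q] = ℤ + q ℤ[q]`, every element of `L_w` is, modulo `q L_w`, an integral combination of the
`H̲_y` with `y ≺ w`; subtracting it from `H̲_u b_i` gives `H̲_w`.

For uniqueness, expand the difference of two candidates in the basis `H̲`: its coefficients lie in
`q ℤ[q]` and are fixed by `q ↦ q⁻¹`, hence vanish.
-/

namespace KazhdanLusztig

open Polynomial

section Bruhat

variable {n : ℕ}

theorem s_mul_self (i : Fin (n - 1)) : s n i * s n i = 1 :=
  Equiv.swap_mul_self _ _

theorem s_inv (i : Fin (n - 1)) : (s n i)⁻¹ = s n i :=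
  Equiv.swap_inv _ _

theorem s_apply_s_apply (i : Fin (n - 1)) (a : Fin n) : s n i (s n i a) = a :=
  Equiv.swap_apply_self _ _ a

theorem mul_s_mul_s (w : Equiv.Perm (Fin n)) (i : Fin (n - 1)) : w * s n i * s n i = w := by
  rw [mul_assoc, s_mul_self, mul_one]

theorem s_eq_swap_of_apply_lt {i : Fin (n - 1)} {a b : Fin n} (hab : a < b)
    (h : s n i b < s n i a) : s n i = Equiv.swap a b := by
  obtain ⟨ha, hb⟩ : (a : ℕ) = i ∧ (b : ℕ) = i + 1 := by
    unfold s at h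
    rw [Equiv.swap_apply_def, Equiv.swap_apply_def] at h
    simp only [Fin.ext_iff, Fin.lt_def] at *
    split_ifs at h <;> simp_all <;> omega
  exact congrArg₂ Equiv.swap (Fin.ext ha.symm) (Fin.ext hb.symm)

theorem wordProd_cons (i : Fin (n - 1)) (l : List (Fin (n - 1))) :
    wordProd n (i :: l) = s n i * wordProd n l := by
  simp [wordProd]

theorem wordProd_append (l m : List (Fin (n - 1))) :
    wordProd n (l ++ m) = wordProd n l * wordProd n m := by
  simp [wordProd]

theorem wordProd_concat (l : List (Fin (n - 1))) (i : Fin (n - 1)) :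
    wordProd n (l ++ [i]) = wordProd n l * s n i := by
  simp [wordProd]

theorem wordProd_surjective : Function.Surjective (wordProd n) := by
  intro w
  cases n with
  | zero => exact ⟨[], Subsingleton.elim _ _⟩
  | succ m =>
    have hw : w ∈ Submonoid.closure (Set.range fun i : Fin m ↦ Equiv.swap i.castSucc i.succ) := by
      rw [Equiv.Perm.mclosure_swap_castSucc_succ]
      exact Submonoid.mem_top w
    induction hw using Submonoid.closure_induction with
    | mem _ hx =>
      obtain ⟨i, rfl⟩ := hx
      exact ⟨[i], mul_one _⟩
    | one => exact ⟨[], rfl⟩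
    | mul _ _ _ _ hx hy =>
      obtain ⟨l, rfl⟩ := hx
      obtain ⟨m, rfl⟩ := hy
      exact ⟨l ++ m, wordProd_append l m⟩

theorem exists_reduced_word (w : Equiv.Perm (Fin n)) :
    ∃ l : List (Fin (n - 1)), l.length = len n w ∧ wordProd n l = w := by
  obtain ⟨l, hl⟩ := wordProd_surjective w
  exact Nat.sInf_mem (s := {k | ∃ l : List (Fin (n - 1)), l.length = k ∧ wordProd n l = w})
    ⟨l.length, l, rfl, hl⟩

theorem len_wordProd_le (l : List (Fin (n - 1))) : len n (wordProd n l) ≤ l.length :=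
  Nat.sInf_le ⟨l, rfl, rfl⟩

theorem len_mul_s_le (w : Equiv.Perm (Fin n)) (i : Fin (n - 1)) :
    len n (w * s n i) ≤ len n w + 1 := by
  obtain ⟨l, hl, rfl⟩ := exists_reduced_word w
  rw [← wordProd_concat, ← hl, ← List.length_concat, List.concat_eq_append]
  exact len_wordProd_le _

/-- The strong exchange condition. -/
theorem exists_sublist_wordProd_eq_mul_swap (l : List (Fin (n - 1))) {a b : Fin n} (hab : a < b)
    (h : wordProd n l b < wordProd n l a) :
    ∃ t : List (Fin (n - 1)), t.Sublist l ∧ t.length + 1 = l.length ∧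
      wordProd n t = wordProd n l * Equiv.swap a b := by
  induction l with
  | nil => exact absurd h hab.not_gt
  | cons i l ih =>
    rcases lt_or_gt_of_ne ((wordProd n l).injective.ne hab.ne) with hlt | hgt
    · rw [wordProd_cons] at h
      refine ⟨l, List.sublist_cons_self _ _, rfl, ?_⟩
      rw [wordProd_cons, mul_assoc, Equiv.mul_swap_eq_swap_mul, ← mul_assoc,
        s_eq_swap_of_apply_lt hlt h, Equiv.swap_mul_self, one_mul]
    · obtain ⟨t, htl, hlen, ht⟩ := ih hgt
      exact ⟨i :: t, htl.cons_cons i, congrArg (· + 1) hlen, by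
        rw [wordProd_cons, wordProd_cons, ht, mul_assoc]⟩

/-- `y` is obtained from `x` by multiplication with a reflection that increases the length.
Instead of the length, the definition compares the values of `x` at the two reflected points. -/
def BruhatStep (x y : Equiv.Perm (Fin n)) : Prop :=
  ∃ a b : Fin n, a < b ∧ x a < x b ∧ y = x * Equiv.swap a b

variable {u w x y : Equiv.Perm (Fin n)} {i : Fin (n - 1)}

theorem BruhatStep.exists_eq_mul_swap (h : BruhatStep x y) :
    ∃ a b : Fin n, a < b ∧ y b < y a ∧ x = y * Equiv.swap a b := by
  obtain ⟨a, b, hab, hx, rfl⟩ := h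
  exact ⟨a, b, hab, by simpa using hx, by simp [mul_assoc]⟩

theorem BruhatStep.len_lt (h : BruhatStep x y) : len n x < len n y := by
  obtain ⟨a, b, hab, hy, rfl⟩ := h.exists_eq_mul_swap
  obtain ⟨l, hl, rfl⟩ := exists_reduced_word y
  obtain ⟨t, -, hlen, ht⟩ := exists_sublist_wordProd_eq_mul_swap l hab hy
  have := len_wordProd_le t
  rw [ht] at this
  omega

theorem BruhatStep.len_mul_s (h : BruhatStep w (w * s n i)) : len n (w * s n i) = len n w + 1 :=
  (len_mul_s_le w i).antisymm h.len_lt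

theorem bruhatStep_mul_s_or (w : Equiv.Perm (Fin n)) (i : Fin (n - 1)) :
    BruhatStep w (w * s n i) ∨ BruhatStep (w * s n i) w := by
  obtain ⟨a, b, hab, hs⟩ : ∃ a b : Fin n, a < b ∧ s n i = Equiv.swap a b :=
    ⟨_, _, Nat.lt_succ_self i, rfl⟩
  rcases lt_or_gt_of_ne (w.injective.ne hab.ne) with h | h
  · exact .inl ⟨a, b, hab, h, by rw [hs]⟩
  · exact .inr ⟨a, b, hab, by simpa [hs] using h, by simp [hs, mul_assoc]⟩

theorem BruhatStep.mul_s (h : BruhatStep x y) (i : Fin (n - 1)) :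
    x * s n i = y ∨ BruhatStep (x * s n i) (y * s n i) := by
  obtain ⟨a, b, hab, hx, rfl⟩ := h
  rcases lt_or_gt_of_ne ((s n i).injective.ne hab.ne) with hs | hs
  · refine .inr ⟨s n i a, s n i b, hs, by simpa [s_apply_s_apply] using hx, ?_⟩
    rw [mul_assoc, mul_assoc, Equiv.mul_swap_eq_swap_mul, s_apply_s_apply, s_apply_s_apply]
  · exact .inl (congrArg (x * ·) (s_eq_swap_of_apply_lt hab hs))

theorem exists_bruhatStep_mul_s_of_ne_one (hw : w ≠ 1) :
    ∃ u i, BruhatStep u (u * s n i) ∧ w = u * s n i := by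
  obtain ⟨l, hl, rfl⟩ := exists_reduced_word w
  rcases List.eq_nil_or_concat' l with rfl | ⟨m, i, rfl⟩
  · exact absurd rfl hw
  · refine ⟨wordProd n m, i, (bruhatStep_mul_s_or _ i).resolve_right fun h => ?_,
      wordProd_concat m i⟩
    have := h.len_lt
    have := len_wordProd_le m
    rw [List.length_append, List.length_singleton, wordProd_concat] at hl
    omega

open Relation

theorem exists_sublist_of_reflTransGen_bruhatStep (h : ReflTransGen BruhatStep x y)
    {l : List (Fin (n - 1))} (hl : wordProd n l = y) :
    ∃ t : List (Fin (n - 1)), t.Sublist l ∧ wordProd n t = x := by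
  induction h generalizing l with
  | refl => exact ⟨l, List.Sublist.refl _, hl⟩
  | tail _ hstep ih =>
    subst hl
    obtain ⟨a, b, hab, hlt, rfl⟩ := hstep.exists_eq_mul_swap
    obtain ⟨t, htl, -, ht⟩ := exists_sublist_wordProd_eq_mul_swap l hab hlt
    obtain ⟨t', ht't, ht'⟩ := ih ht
    exact ⟨t', ht't.trans htl, ht'⟩

/-- The lifting property of the Bruhat order. -/
theorem reflTransGen_bruhatStep_mul_s (h : ReflTransGen BruhatStep x u)
    (hu : BruhatStep u (u * s n i)) : ReflTransGen BruhatStep (x * s n i) (u * s n i) := by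
  induction h using ReflTransGen.head_induction_on with
  | refl => exact .refl
  | head hstep hle ih =>
    rcases hstep.mul_s i with heq | hstep'
    · exact heq ▸ hle.tail hu
    · exact ih.head hstep'

theorem reflTransGen_bruhatStep_of_sublist {l t : List (Fin (n - 1))}
    (hl : l.length = len n (wordProd n l)) (ht : t.Sublist l) :
    ReflTransGen BruhatStep (wordProd n t) (wordProd n l) := by
  induction l using List.reverseRecOn generalizing t with
  | nil => rw [List.sublist_nil.mp ht]
  | append_singleton l i ih =>
    rw [List.length_append, List.length_singleton, wordProd_concat] at hl
    have hle := len_wordProd_le l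
    have hup : BruhatStep (wordProd n l) (wordProd n l * s n i) := by
      refine (bruhatStep_mul_s_or _ i).resolve_right fun h => ?_
      have := h.len_lt
      omega
    have hred : l.length = len n (wordProd n l) := by
      have := hup.len_mul_s
      omega
    rw [wordProd_concat]
    obtain ⟨t₁, t₂, rfl, ht₁, ht₂⟩ := List.sublist_append_iff.mp ht
    rcases List.sublist_singleton.mp ht₂ with rfl | rfl
    · rw [List.append_nil]
      exact (ih hred ht₁).tail hup
    · rw [wordProd_concat]
      exact reflTransGen_bruhatStep_mul_s (ih hred ht₁) hup

theorem bruhatLE_iff_reflTransGen : bruhatLE n x y ↔ ReflTransGen BruhatStep x y := by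
  constructor
  · rintro ⟨l, hl, rfl, t, ht, rfl⟩
    exact reflTransGen_bruhatStep_of_sublist hl ht
  · intro h
    obtain ⟨l, hl, hly⟩ := exists_reduced_word y
    exact ⟨l, hl, hly, exists_sublist_of_reflTransGen_bruhatStep h hly⟩

theorem len_lt_of_transGen_bruhatStep (h : TransGen BruhatStep x y) : len n x < len n y := by
  induction h with
  | single hstep => exact hstep.len_lt
  | tail _ hstep ih => exact ih.trans hstep.len_lt

theorem bruhatLT_iff_transGen : bruhatLT n x y ↔ TransGen BruhatStep x y := by
  rw [bruhatLT, bruhatLE_iff_reflTransGen, reflTransGen_iff_eq_or_transGen]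
  refine ⟨fun h => h.1.resolve_left h.2.symm, fun h => ⟨.inr h, ?_⟩⟩
  rintro rfl
  exact (len_lt_of_transGen_bruhatStep h).false

instance : IsTrans (Equiv.Perm (Fin n)) (bruhatLT n) where
  trans _ _ _ := by
    simp only [bruhatLT_iff_transGen]
    exact TransGen.trans

instance : IsWellFounded (Equiv.Perm (Fin n)) (bruhatLT n) where
  wf := Subrelation.wf (fun h => len_lt_of_transGen_bruhatStep (bruhatLT_iff_transGen.mp h))
    (measure (len n)).wf

theorem BruhatStep.bruhatLT (h : BruhatStep x y) : bruhatLT n x y :=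
  bruhatLT_iff_transGen.mpr (.single h)

theorem bruhatLT_mul_s (h : bruhatLT n x u) (hu : BruhatStep u (u * s n i)) :
    bruhatLT n (x * s n i) (u * s n i) :=
  ⟨bruhatLE_iff_reflTransGen.mpr
    (reflTransGen_bruhatStep_mul_s (bruhatLE_iff_reflTransGen.mp h.1) hu),
    fun heq => h.2 (mul_right_cancel heq)⟩

end Bruhat

section CanonicalBasis

variable {ι k R M F : Type*} [CommRing k] [CommRing R] [Algebra k R] [AddCommGroup M] [Module R M]
  [FunLike F M M]

variable (k) in
/-- The `k[v]`-span of the `H y` with `y` below `w`. -/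
def lowerLattice (r : ι → ι → Prop) (v : R) (H : ι → M) (w : ι) :
    Submodule (Algebra.adjoin k {v}) M :=
  Submodule.span _ (H '' {y | r y w})

variable (k) in
/-- `c` is a canonical element with leading term `H w` for the involution `ψ`: it is fixed by `ψ`
and differs from `H w` by a `v k[v]`-combination of the `H y` with `y` below `w`. -/
def IsCanonicalAt (ψ : F) (r : ι → ι → Prop) (v : R) (H : ι → M) (w : ι) (c : M) : Prop :=
  ψ c = c ∧ ∃ z ∈ lowerLattice k r v H w, c = H w + v • z

variable {ψ : F} {r : ι → ι → Prop} {v : R} {H C : ι → M} {w y : ι} {c x z : M}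

theorem mem_lowerLattice (h : r y w) : H y ∈ lowerLattice k r v H w :=
  Submodule.subset_span ⟨y, h, rfl⟩

theorem lowerLattice_mono [IsTrans ι r] (h : r y w) :
    lowerLattice k r v H y ≤ lowerLattice k r v H w :=
  Submodule.span_mono (Set.image_mono fun _ hx => trans_of r hx h)

theorem aeval_smul_mem_lowerLattice (p : k[X]) (hz : z ∈ lowerLattice k r v H w) :
    aeval v p • z ∈ lowerLattice k r v H w :=
  Submodule.smul_mem _ (⟨aeval v p, aeval_mem_adjoin_singleton k v⟩ : Algebra.adjoin k {v}) hz

theorem smul_mem_lowerLattice (hz : z ∈ lowerLattice k r v H w) :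
    v • z ∈ lowerLattice k r v H w := by
  simpa using aeval_smul_mem_lowerLattice X hz

theorem exists_aeval_eq (a : Algebra.adjoin k {v}) : ∃ p : k[X], aeval v p = (a : R) := by
  simpa [Algebra.adjoin_singleton_eq_range_aeval] using a.2

theorem mem_lowerLattice_iff [Fintype ι] :
    z ∈ lowerLattice k r v H w ↔
      ∃ P : ι → k[X], (∀ y, ¬ r y w → P y = 0) ∧ z = ∑ y, aeval v (P y) • H y := by
  constructor
  · intro hz
    induction hz using Submodule.span_induction with
    | mem _ hx =>
      obtain ⟨y, hy, rfl⟩ := hx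
      refine ⟨Pi.single y 1, fun x hx => Pi.single_eq_of_ne (by rintro rfl; exact hx hy) 1, ?_⟩
      rw [Fintype.sum_eq_single y fun x hx => by rw [Pi.single_eq_of_ne hx, map_zero, zero_smul],
        Pi.single_eq_same, map_one, one_smul]
    | zero => exact ⟨0, fun _ _ => rfl, by simp⟩
    | add _ _ _ _ hx hy =>
      obtain ⟨P, hP, rfl⟩ := hx
      obtain ⟨Q, hQ, rfl⟩ := hy
      exact ⟨P + Q, fun y hy => by simp [hP y hy, hQ y hy],
        by simp [add_smul, Finset.sum_add_distrib]⟩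
    | smul a _ _ hx =>
      obtain ⟨P, hP, rfl⟩ := hx
      obtain ⟨p, hp⟩ := exists_aeval_eq a
      exact ⟨fun y => p * P y, fun y hy => by simp [hP y hy],
        by simp [Subalgebra.smul_def, ← hp, mul_smul, Finset.smul_sum]⟩
  · rintro ⟨P, hP, rfl⟩
    refine Submodule.sum_mem _ fun y _ => ?_
    by_cases hy : r y w
    · exact aeval_smul_mem_lowerLattice _ (mem_lowerLattice hy)
    · simp [hP y hy]

theorem isCanonicalAt_iff [Fintype ι] :
    IsCanonicalAt k ψ r v H w c ↔ ψ c = c ∧ ∃ P : ι → k[X], (∀ y, ¬ r y w → P y = 0) ∧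
      c = H w + ∑ y, (v * aeval v (P y)) • H y := by
  refine and_congr_right fun _ => ⟨?_, ?_⟩
  · rintro ⟨z, hz, rfl⟩
    obtain ⟨P, hP, rfl⟩ := mem_lowerLattice_iff.mp hz
    exact ⟨P, hP, by simp only [Finset.smul_sum, mul_smul]⟩
  · rintro ⟨P, hP, rfl⟩
    exact ⟨_, mem_lowerLattice_iff.mpr ⟨P, hP, rfl⟩, by simp only [Finset.smul_sum, mul_smul]⟩

theorem IsCanonicalAt.sub_mem_lowerLattice (hc : IsCanonicalAt k ψ r v H w c) :
    c - H w ∈ lowerLattice k r v H w := by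
  obtain ⟨-, z, hz, rfl⟩ := hc
  simpa using smul_mem_lowerLattice hz

variable {σ : R →ₐ[k] R}

section Existence

variable [AddMonoidHomClass F M M] [IsTrans ι r]

theorem exists_fixed_add_smul_eq (hψ : ∀ (a : R) (x : M), ψ (a • x) = σ a • ψ x)
    (hC : ∀ y, r y w → ∃ c, IsCanonicalAt k ψ r v H y c)
    (hx : x ∈ lowerLattice k r v H w) :
    ∃ b, ψ b = b ∧ ∃ z ∈ lowerLattice k r v H w, x = b + v • z := by
  induction hx using Submodule.span_induction with
  | mem _ hx =>
    obtain ⟨y, hy, rfl⟩ := hx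
    obtain ⟨c, hc, z, hz, rfl⟩ := hC y hy
    exact ⟨_, hc, -z, neg_mem (lowerLattice_mono hy hz), by rw [smul_neg, add_neg_cancel_right]⟩
  | zero => exact ⟨0, map_zero ψ, 0, zero_mem _, by simp⟩
  | add _ _ _ _ hx hy =>
    obtain ⟨b, hb, z, hz, rfl⟩ := hx
    obtain ⟨b', hb', z', hz', rfl⟩ := hy
    exact ⟨b + b', by rw [map_add, hb, hb'], z + z', add_mem hz hz',
      by rw [smul_add, add_add_add_comm]⟩
  | smul a x hx hbz =>
    obtain ⟨b, hb, z, hz, hxb⟩ := hbz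
    obtain ⟨p, hp⟩ := exists_aeval_eq a
    have hsplit : (a : R) = v * aeval v p.divX + algebraMap k R (p.coeff 0) := by
      rw [← hp]
      conv_lhs => rw [← X_mul_divX_add p]
      simp only [map_add, map_mul, aeval_X, aeval_C]
    refine ⟨algebraMap k R (p.coeff 0) • b, by rw [hψ, AlgHom.commutes, hb],
      aeval v p.divX • x + algebraMap k R (p.coeff 0) • z,
      add_mem (aeval_smul_mem_lowerLattice _ hx) ?_, ?_⟩
    · simpa only [aeval_C] using aeval_smul_mem_lowerLattice (Polynomial.C (p.coeff 0)) hz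
    · calc a • x = v • aeval v p.divX • x + algebraMap k R (p.coeff 0) • x := by
            rw [Subalgebra.smul_def, hsplit, add_smul, mul_smul]
        _ = v • aeval v p.divX • x + algebraMap k R (p.coeff 0) • (b + v • z) := by rw [← hxb]
        _ = algebraMap k R (p.coeff 0) • b +
            v • (aeval v p.divX • x + algebraMap k R (p.coeff 0) • z) := by
          rw [smul_add, smul_add, smul_comm v (algebraMap k R _) z]
          abel

theorem exists_isCanonicalAt_of_fixed (hψ : ∀ (a : R) (x : M), ψ (a • x) = σ a • ψ x)
    (hC : ∀ y, r y w → ∃ c, IsCanonicalAt k ψ r v H y c)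
    (hψx : ψ x = x) (hx : x - H w ∈ lowerLattice k r v H w) : ∃ c, IsCanonicalAt k ψ r v H w c := by
  obtain ⟨b, hb, z, hz, hxb⟩ := exists_fixed_add_smul_eq hψ hC hx
  exact ⟨x - b, by rw [map_sub, hψx, hb], z, hz, by rw [sub_eq_iff_eq_add.mp hxb]; abel⟩

end Existence

section Uniqueness

theorem eq_zero_of_map_mul_aeval_eq (hv : Transcendental k v) (hσ : σ v * v = 1) {p : k[X]}
    (h : σ (v * aeval v p) = v * aeval v p) : p = 0 := by
  by_contra hp
  have : Nontrivial k := nontrivial_iff.mp ⟨p, 0, hp⟩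
  have hinv : aeval (σ v) (X * p) = aeval v (X * p) := by
    rw [aeval_algHom_apply, map_mul, aeval_X, h]
  let : Invertible (σ v) := ⟨v, by rwa [mul_comm], hσ⟩
  have hrev : aeval v (X * p).reverse * σ v ^ (X * p).natDegree = aeval (σ v) (X * p) :=
    eval₂_reverse_mul_pow (algebraMap k R) (σ v) (X * p)
  have hreflect : (X * p).reverse = X * p * X ^ (X * p).natDegree := by
    apply transcendental_iff_injective.mp hv
    rw [map_mul (aeval v) (X * p), ← hinv, ← hrev, map_pow, aeval_X, mul_assoc, ← mul_pow, hσ,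
      one_pow, mul_one]
  have hdeg := congrArg natDegree hreflect
  rw [natDegree_mul_X_pow _ (monic_X.mul_right_ne_zero hp)] at hdeg
  have := reverse_natDegree_le (X * p)
  have := natDegree_X_mul hp
  omega

theorem eq_zero_of_fixed_smul [Finite ι] [AddMonoidHomClass F M M] (hv : Transcendental k v)
    (hσ : σ v * v = 1) (hψ : ∀ (a : R) (x : M), ψ (a • x) = σ a • ψ x)
    (hLI : LinearIndependent R C) (hC : ∀ y, ψ (C y) = C y)
    (hz : z ∈ Submodule.span (Algebra.adjoin k {v}) (Set.range C)) (hfix : ψ (v • z) = v • z) :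
    z = 0 := by
  cases nonempty_fintype ι
  obtain ⟨a, rfl⟩ := (Submodule.mem_span_range_iff_exists_fun _).mp hz
  have hsum : ∑ y, (σ (v * a y) - v * a y) • C y = 0 := by
    simp only [sub_smul, Finset.sum_sub_distrib, sub_eq_zero]
    simpa [Finset.smul_sum, Subalgebra.smul_def, hψ, hC, smul_smul] using hfix
  refine Finset.sum_eq_zero fun y _ => ?_
  obtain ⟨p, hp⟩ := exists_aeval_eq (a y)
  have hay := sub_eq_zero.mp (Fintype.linearIndependent_iff.mp hLI _ hsum y)
  rw [← hp] at hay
  rw [Subalgebra.smul_def, ← hp, eq_zero_of_map_mul_aeval_eq hv hσ hay, map_zero, zero_smul]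

theorem span_range_le_of_sub_mem {S : Type*} [Ring S] [Module S M] [IsWellFounded ι r]
    (h : ∀ y, C y - H y ∈ Submodule.span S (H '' {x | r x y})) :
    Submodule.span S (Set.range H) ≤ Submodule.span S (Set.range C) := by
  refine Submodule.span_le.mpr (Set.range_subset_iff.mpr fun y => ?_)
  induction y using IsWellFounded.induction r with
  | ind y ih =>
    have hlower := Submodule.span_le.mpr (Set.image_subset_iff.mpr ih) (h y)
    simpa using sub_mem (Submodule.subset_span (Set.mem_range_self y)) hlower

theorem span_range_eq_top_of_isCanonicalAt [IsWellFounded ι r]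
    (hspan : Submodule.span R (Set.range H) = ⊤) (hC : ∀ y, IsCanonicalAt k ψ r v H y (C y)) :
    Submodule.span R (Set.range C) = ⊤ := by
  have hle := span_range_le_of_sub_mem fun y => (hC y).sub_mem_lowerLattice
  rw [← top_le_iff, ← hspan, Submodule.span_le]
  exact (Submodule.subset_span.trans hle).trans (Submodule.span_subset_span _ R _)

theorem existsUnique_canonical_basis [Nontrivial R] [Finite ι] [IsWellFounded ι r]
    [AddMonoidHomClass F M M]
    (hv : Transcendental k v) (hσ : σ v * v = 1) (hψ : ∀ (a : R) (x : M), ψ (a • x) = σ a • ψ x)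
    (hLI : LinearIndependent R H) (hspan : Submodule.span R (Set.range H) = ⊤)
    (hex : ∀ w, ∃ c, IsCanonicalAt k ψ r v H w c) :
    ∃! C : ι → M, (LinearIndependent R C ∧ Submodule.span R (Set.range C) = ⊤) ∧
      ∀ w, IsCanonicalAt k ψ r v H w (C w) := by
  cases nonempty_fintype ι
  choose C hC using hex
  have hspanC := span_range_eq_top_of_isCanonicalAt hspan hC
  have hLIC : LinearIndependent R C := linearIndependent_of_top_le_span_of_card_eq_finrank
    hspanC.ge (Module.finrank_eq_card_basis (Module.Basis.mk hLI hspan.ge)).symm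
  refine ⟨C, ⟨⟨hLIC, hspanC⟩, hC⟩, fun D hD => funext fun w => ?_⟩
  obtain ⟨hψD, z, hz, hDz⟩ := hD.2 w
  obtain ⟨hψC, z', hz', hCz⟩ := hC w
  have hsub : D w - C w = v • (z - z') := by
    rw [hDz, hCz, smul_sub]
    abel
  have hmem : z - z' ∈ Submodule.span (Algebra.adjoin k {v}) (Set.range C) :=
    span_range_le_of_sub_mem (fun y => (hC y).sub_mem_lowerLattice)
      (Submodule.span_mono (Set.image_subset_range _ _) (sub_mem hz hz'))
  have hzero : z - z' = 0 := eq_zero_of_fixed_smul hv hσ hψ hLIC (fun y => (hC y).1) hmem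
    (by rw [← hsub, map_sub, hψD, hψC])
  rwa [hzero, smul_zero, sub_eq_zero] at hsub

end Uniqueness

end CanonicalBasis

section Hecke

variable {n : ℕ} {k R A : Type*} [CommRing k] [CommRing R] [Algebra k R] [Ring A] [Algebra R A]

/-- `H` satisfies the relations of the standard basis of the Hecke algebra of the symmetric group
with parameter `v`. Linear independence and spanning are not part of the definition. -/
structure IsHeckeFamily (v : Rˣ) (H : Equiv.Perm (Fin n) → A) : Prop where
  map_one : H 1 = 1
  map_mul_s : ∀ (w : Equiv.Perm (Fin n)) (i : Fin (n - 1)),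
    len n (w * s n i) = len n w + 1 → H (w * s n i) = H w * H (s n i)
  map_s_mul_self : ∀ i : Fin (n - 1),
    H (s n i) * H (s n i) = ((↑v⁻¹ : R) - ↑v) • H (s n i) + 1

/-- The Kazhdan–Lusztig generator `H_{s_i} + v`, the canonical basis element of `s_i`. -/
def klGenerator (v : Rˣ) (H : Equiv.Perm (Fin n) → A) (i : Fin (n - 1)) : A :=
  H (s n i) + (v : R) • 1

variable {v : Rˣ} {H : Equiv.Perm (Fin n) → A} {u w : Equiv.Perm (Fin n)} {i : Fin (n - 1)}

namespace IsHeckeFamily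

theorem mul_klGenerator_of_up (hH : IsHeckeFamily v H) (h : BruhatStep w (w * s n i)) :
    H w * klGenerator v H i = H (w * s n i) + (v : R) • H w := by
  rw [klGenerator, mul_add, mul_smul_comm, mul_one, hH.map_mul_s w i h.len_mul_s]

theorem mul_klGenerator_of_down (hH : IsHeckeFamily v H) (h : BruhatStep (w * s n i) w) :
    H w * klGenerator v H i = H (w * s n i) + (↑v⁻¹ : R) • H w := by
  have hup : BruhatStep (w * s n i) (w * s n i * s n i) := by rwa [mul_s_mul_s]
  have hw := hH.map_mul_s _ i hup.len_mul_s
  rw [mul_s_mul_s] at hw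
  have hsq : H w * H (s n i) = ((↑v⁻¹ : R) - ↑v) • H w + H (w * s n i) := by
    conv_lhs => rw [hw, mul_assoc, hH.map_s_mul_self, mul_add, mul_smul_comm, ← hw, mul_one]
  rw [klGenerator, mul_add, mul_smul_comm, mul_one, hsq, sub_smul]
  abel

theorem smul_mul_klGenerator_mem (hH : IsHeckeFamily v H) (hu : BruhatStep u (u * s n i)) {z : A}
    (hz : z ∈ lowerLattice k (bruhatLT n) (v : R) H u) :
    (v : R) • (z * klGenerator v H i) ∈ lowerLattice k (bruhatLT n) (v : R) H (u * s n i) := by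
  induction hz using Submodule.span_induction with
  | mem _ hx =>
    obtain ⟨y, hy, rfl⟩ := hx
    have hHy : H y ∈ lowerLattice k (bruhatLT n) (v : R) H (u * s n i) :=
      mem_lowerLattice (trans_of (bruhatLT n) hy hu.bruhatLT)
    have hHys : H (y * s n i) ∈ lowerLattice k (bruhatLT n) (v : R) H (u * s n i) :=
      mem_lowerLattice (k := k) (H := H) (bruhatLT_mul_s hy hu)
    rcases bruhatStep_mul_s_or y i with hup | hdown
    · rw [hH.mul_klGenerator_of_up hup]
      exact smul_mem_lowerLattice (add_mem hHys (smul_mem_lowerLattice hHy))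
    · rw [hH.mul_klGenerator_of_down hdown, smul_add, smul_smul, Units.mul_inv, one_smul]
      exact add_mem (smul_mem_lowerLattice hHys) hHy
  | zero => simp
  | add _ _ _ _ hx hy =>
    rw [add_mul, smul_add]
    exact add_mem hx hy
  | smul a _ _ hx =>
    rw [smul_mul_assoc, smul_comm]
    exact Submodule.smul_mem _ a hx

variable {σ : R →ₐ[k] R} {bar : A →+* A}

theorem bar_klGenerator (hH : IsHeckeFamily v H) (hσ : σ v = ↑v⁻¹)
    (hbar_smul : ∀ (a : R) (x : A), bar (a • x) = σ a • bar x)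
    (hbar_s : bar (H (s n i)) * H (s n i) = 1) :
    bar (klGenerator v H i) = klGenerator v H i := by
  have hinv : H (s n i) * (H (s n i) - ((↑v⁻¹ : R) - ↑v) • 1) = 1 := by
    rw [mul_sub, hH.map_s_mul_self, mul_smul_comm, mul_one, add_sub_cancel_left]
  rw [klGenerator, map_add, hbar_smul, hσ, _root_.map_one, left_inv_eq_right_inv hbar_s hinv,
    sub_smul]
  abel

theorem exists_isCanonicalAt (hH : IsHeckeFamily v H)
    (hbar_smul : ∀ (a : R) (x : A), bar (a • x) = σ a • bar x)
    (hbar : ∀ i, bar (klGenerator v H i) = klGenerator v H i) (w : Equiv.Perm (Fin n)) :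
    ∃ c, IsCanonicalAt k bar (bruhatLT n) (v : R) H w c := by
  induction w using IsWellFounded.induction (bruhatLT n) with
  | ind w ih =>
    by_cases hw : w = 1
    · exact ⟨1, _root_.map_one bar, 0, zero_mem _, by rw [hw, hH.map_one, smul_zero, add_zero]⟩
    obtain ⟨u, i, hu, rfl⟩ := exists_bruhatStep_mul_s_of_ne_one hw
    obtain ⟨c, hc, z, hz, hcz⟩ := ih u hu.bruhatLT
    refine exists_isCanonicalAt_of_fixed hbar_smul ih (x := c * klGenerator v H i)
      (by rw [map_mul, hc, hbar]) ?_
    have hexpand : c * klGenerator v H i - H (u * s n i) =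
        (v : R) • H u + (v : R) • (z * klGenerator v H i) := by
      rw [hcz, add_mul, hH.mul_klGenerator_of_up hu, smul_mul_assoc]
      abel
    rw [hexpand]
    exact add_mem (smul_mem_lowerLattice (mem_lowerLattice hu.bruhatLT))
      (hH.smul_mul_klGenerator_mem hu hz)

end IsHeckeFamily

end Hecke

theorem transcendental_q : Transcendental ℤ q :=
  (RatFunc.transcendental_X (K := ℂ)).restrictScalars (RingHom.injective_int (algebraMap ℤ ℂ))

end KazhdanLusztig

open KazhdanLusztig in
theorem statement0_general {n : ℕ} {k R A : Type*} [CommRing k] [CommRing R] [Nontrivial R]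
    [Algebra k R] [Ring A] [Algebra R A] {v : Rˣ} (hv : Transcendental k (v : R))
    {H : Equiv.Perm (Fin n) → A} (hLI : LinearIndependent R H)
    (hspan : Submodule.span R (Set.range H) = ⊤) (hH : IsHeckeFamily v H)
    {σ : R →ₐ[k] R} (hσ : σ v = ↑v⁻¹) {bar : A →+* A}
    (hbar_smul : ∀ (a : R) (x : A), bar (a • x) = σ a • bar x)
    (hbar_s : ∀ i : Fin (n - 1), bar (H (s n i)) * H (s n i) = 1) :
    ∃! C : Equiv.Perm (Fin n) → A,
      (LinearIndependent R C ∧ Submodule.span R (Set.range C) = ⊤) ∧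
      (∀ w, bar (C w) = C w) ∧
      (∀ w, ∃ P : Equiv.Perm (Fin n) → Polynomial k,
        (∀ w', ¬ bruhatLT n w' w → P w' = 0) ∧
        C w = H w + ∑ w' : Equiv.Perm (Fin n),
          ((v : R) * Polynomial.aeval (v : R) (P w')) • H w') := by
  have hex := hH.exists_isCanonicalAt hbar_smul fun i => hH.bar_klGenerator hσ hbar_smul (hbar_s i)
  simpa only [isCanonicalAt_iff, forall_and] using
    existsUnique_canonical_basis hv (by rw [hσ, Units.inv_mul]) hbar_smul hLI hspan hex

/-- There exists a unique basis `{H̲_w : w ∈ S_n}` of the Hecke algebra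
`H_n` consisting of bar-invariant elements such that
`H̲_w = H_w + Σ_{w' ≺ w} P_{w',w}(q)·H_{w'}` with `P_{w',w} ∈ q·ℤ[q]` for every `w' ≺ w`. -/
theorem statement0 (n : ℕ) (A : Type) [Ring A] [Algebra K A]
    (H : Equiv.Perm (Fin n) → A)
    (hLI : LinearIndependent K H)
    (hspan : Submodule.span K (Set.range H) = ⊤)
    (hone : H 1 = 1)
    (hmul : ∀ (w : Equiv.Perm (Fin n)) (i : Fin (n - 1)),
      len n (w * s n i) = len n w + 1 → H (w * s n i) = H w * H (s n i))
    (hquad : ∀ i : Fin (n - 1),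
      H (s n i) * H (s n i) = (q⁻¹ - q) • H (s n i) + 1)
    (barK : K →+* K) (hbarKq : barK q = q⁻¹)
    (hbarKc : ∀ z : ℂ, barK (algebraMap ℂ K z) = algebraMap ℂ K z)
    (bar : A →+* A)
    (hbar_smul : ∀ (c : K) (x : A), bar (c • x) = barK c • bar x)
    (hbarH : ∀ w : Equiv.Perm (Fin n),
      bar (H w) * H w⁻¹ = 1 ∧ H w⁻¹ * bar (H w) = 1) :
    ∃! C : Equiv.Perm (Fin n) → A,
      (LinearIndependent K C ∧ Submodule.span K (Set.range C) = ⊤) ∧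
      (∀ w, bar (C w) = C w) ∧
      (∀ w, ∃ P : Equiv.Perm (Fin n) → Polynomial ℤ,
        (∀ w', ¬ bruhatLT n w' w → P w' = 0) ∧
        C w = H w + ∑ w' : Equiv.Perm (Fin n),
          (q * Polynomial.aeval q (P w')) • H w') :=
  statement0_general (v := Units.mk0 q RatFunc.X_ne_zero) (σ := { barK with commutes' := by simp })
    KazhdanLusztig.transcendental_q hLI hspan ⟨hone, hmul, hquad⟩ hbarKq hbar_smul
    fun i => by simpa only [KazhdanLusztig.s_inv] using (hbarH (s n i)).1
end
end

section
/- There exists a unique basis {N̲_w : w ∈ W^{p+q}} of the mixed induced module M^p_q consisting of bar-invariant elements such that N̲_w = N_w + Σ_{w' ≺ w} R_{w',w}(q)·N_{w'} with R_{w',w} ∈ q·ℤ[q] for all w' ≺ w. -/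
/-!
STATEMENT 1: Existence and uniqueness of the canonical basis of the mixed induced
Hecke module `M^p_q`.

The Hecke algebra `H_n` is encoded as a `ℂ(q)`-algebra `A` with its standard basis `H`,
and the mixed induced module `M^p_q` is encoded as a `ℂ(q)`-vector space `M` with a
right `A`-action `act`, a cyclic vector `N 1` on which the generators `H_i` for `i ∈ P`
(resp. `i ∈ Q`) act by `-q` (resp. `q⁻¹`), with standard basis `N w = N 1 · H_w` indexed
by the shortest coset representatives `w ∈ W^{p+q}`, and a bar involution `barM`
compatible with the bar involution of `A` and fixing `N 1`.
-/

open scoped Classical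

noncomputable section

/-- The parabolic subgroup of `S_n` generated by the simple transpositions indexed by `P`. -/
def parab (n : ℕ) (P : Finset (Fin (n - 1))) : Subgroup (Equiv.Perm (Fin n)) :=
  Subgroup.closure {σ | ∃ i ∈ P, σ = s n i}

/-- `w` is a shortest coset representative for `W_P \ S_n`. -/
def IsShort (n : ℕ) (P : Finset (Fin (n - 1))) (w : Equiv.Perm (Fin n)) : Prop :=
  ∀ x ∈ parab n P, len n w ≤ len n (x * w)

/-!
The products `C_{i₁} ⋯ C_{i_r}` of the bar-invariant elements `C_i = H_i + q`, taken over reduced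
words of the shortest representatives `w`, act on the bar-invariant vector `N 1` to give
bar-invariant vectors `D_w = N w + ∑ a_y N y`, where `y < w` in the Bruhat order and
`a_y ∈ ℤ[q, q⁻¹]`. Every element of `ℤ[q, q⁻¹]` is congruent modulo `qℤ[q]` to one that is fixed by
`q ↦ q⁻¹`, so bar-invariant combinations of the vectors with smaller index can be subtracted from
`D_w` until all coefficients lie in `qℤ[q]`. Two results of this procedure differ by a
bar-invariant vector with coefficients in `qℤ[q]`; the top coefficient of such a vector is fixed by
`q ↦ q⁻¹`, but `qℤ[q]` contains no nonzero element fixed by `q ↦ q⁻¹`.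
-/

section CoeffSpan

variable {k M I : Type*} [Ring k] [AddCommGroup M] [Module k M]

/-- The combinations of the vectors `N y`, for `y ∈ t`, with coefficients in the additive
subgroup `S` of the scalars. -/
def coeffSpan (S : AddSubgroup k) (N : I → M) (t : Set I) : AddSubgroup M :=
  AddSubgroup.closure (Set.image2 (fun a y ↦ a • N y) (S : Set k) t)

variable {S S' : AddSubgroup k} {N : I → M} {t t' : Set I}

lemma smul_mem_coeffSpan {a : k} {y : I} (ha : a ∈ S) (hy : y ∈ t) :
    a • N y ∈ coeffSpan S N t :=
  AddSubgroup.subset_closure (Set.mem_image2_of_mem ha hy)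

lemma coeffSpan_le_iff {G : AddSubgroup M} :
    coeffSpan S N t ≤ G ↔ ∀ a ∈ S, ∀ y ∈ t, a • N y ∈ G := by
  rw [coeffSpan, AddSubgroup.closure_le, Set.image2_subset_iff]
  rfl

lemma coeffSpan_mono (hS : S ≤ S') (ht : t ⊆ t') : coeffSpan S N t ≤ coeffSpan S' N t' :=
  AddSubgroup.closure_mono (Set.image2_subset hS ht)

lemma smul_mem_coeffSpan_of_subring {L : Subring k} {a : k} (ha : a ∈ L) {m : M}
    (hm : m ∈ coeffSpan L.toAddSubgroup N t) : a • m ∈ coeffSpan L.toAddSubgroup N t := by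
  suffices h : coeffSpan L.toAddSubgroup N t ≤
      (coeffSpan L.toAddSubgroup N t).comap (DistribSMul.toAddMonoidHom M a) from h hm
  refine coeffSpan_le_iff.2 fun c hc y hy ↦ ?_
  rw [AddSubgroup.mem_comap, DistribSMul.toAddMonoidHom_apply, smul_smul]
  exact smul_mem_coeffSpan (L.mul_mem ha hc) hy

lemma mem_coeffSpan_basis_iff (b : Module.Basis I k M) {m : M} :
    m ∈ coeffSpan S b t ↔ ∀ y, b.repr m y ∈ S ∧ (y ∉ t → b.repr m y = 0) := by
  constructor
  · intro hm y
    constructor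
    · suffices h : coeffSpan S b t ≤ S.comap (b.coord y).toAddMonoidHom from h hm
      refine coeffSpan_le_iff.2 fun a ha z _ ↦ ?_
      by_cases hzy : z = y <;> simp [hzy, ha]
    · intro hy
      suffices h : coeffSpan S b t ≤ (b.coord y).toAddMonoidHom.ker from h hm
      refine coeffSpan_le_iff.2 fun a _ z hz ↦ ?_
      have hzy : z ≠ y := by rintro rfl; exact hy hz
      simp [AddMonoidHom.mem_ker, hzy]
  · intro h
    rw [← b.linearCombination_repr m]
    refine sum_mem fun y _ ↦ ?_
    by_cases hy : y ∈ t
    · exact smul_mem_coeffSpan (h y).1 hy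
    · simpa only [(h y).2 hy, map_zero] using zero_mem _

end CoeffSpan

section CanonicalBasis

variable {k M I : Type*} [CommRing k] [AddCommGroup M] [Module k M] [PartialOrder I]
  {σ : k →+* k} {bar : M →ₛₗ[σ] M} {L : Subring k} {S : AddSubgroup k} {N : I → M}

/-- `c` is a bar-invariant element of the form `N w + ∑ a_y N y`, summed over `y < w`, with all
`a_y` in `S`. For `S = qℤ[q]` these are the elements of the canonical basis. -/
structure IsBarInvariantLift (bar : M →ₛₗ[σ] M) (S : AddSubgroup k) (N : I → M) (w : I)
    (c : M) : Prop where
  bar_eq : bar c = c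
  sub_mem : c - N w ∈ coeffSpan S N (Set.Iio w)

/-- The additive subgroup of bar-invariant elements. -/
def barInvariants (bar : M →ₛₗ[σ] M) : AddSubgroup M :=
  bar.toAddMonoidHom.eqLocus (AddMonoidHom.id M)

lemma mem_barInvariants {m : M} : m ∈ barInvariants bar ↔ bar m = m := Iff.rfl

section Existence

variable [WellFoundedLT I]

lemma coeffSpan_le_barInvariants_sup (hSL : S ≤ L.toAddSubgroup)
    (hL : ∀ a ∈ L, ∃ a₀ ∈ L, σ a₀ = a₀ ∧ a - a₀ ∈ S) {t : Set I} (ht : IsLowerSet t)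
    (hC : ∀ y ∈ t, ∃ c, IsBarInvariantLift bar S N y c) :
    coeffSpan L.toAddSubgroup N t ≤ barInvariants bar ⊔ coeffSpan S N t := by
  refine coeffSpan_le_iff.2 fun a ha y ↦ ?_
  induction y using WellFoundedLT.induction generalizing a with
  | _ y ih =>
  intro hy
  obtain ⟨a₀, ha₀, hσ, hS⟩ := hL a ha
  obtain ⟨c, hc⟩ := hC y hy
  have h_inv : a₀ • c ∈ barInvariants bar := by
    rw [mem_barInvariants, map_smulₛₗ, hσ, hc.bar_eq]
  have h_lower : a₀ • (c - N y) ∈ barInvariants bar ⊔ coeffSpan S N t := by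
    have h_le : coeffSpan L.toAddSubgroup N (Set.Iio y) ≤ barInvariants bar ⊔ coeffSpan S N t :=
      coeffSpan_le_iff.2 fun a' ha' z hz ↦ ih z hz a' ha' (ht (le_of_lt hz) hy)
    exact h_le (smul_mem_coeffSpan_of_subring ha₀ (coeffSpan_mono hSL subset_rfl hc.sub_mem))
  have h_split : a • N y = a₀ • c - a₀ • (c - N y) + (a - a₀) • N y := by module
  rw [h_split]
  exact add_mem (sub_mem (AddSubgroup.mem_sup_left h_inv) h_lower)
    (AddSubgroup.mem_sup_right (smul_mem_coeffSpan hS hy))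

theorem exists_isBarInvariantLift (hSL : S ≤ L.toAddSubgroup)
    (hL : ∀ a ∈ L, ∃ a₀ ∈ L, σ a₀ = a₀ ∧ a - a₀ ∈ S)
    (hD : ∀ w, ∃ d, IsBarInvariantLift bar L.toAddSubgroup N w d) (w : I) :
    ∃ c, IsBarInvariantLift bar S N w c := by
  induction w using WellFoundedLT.induction with
  | _ w ih =>
  obtain ⟨d, hd⟩ := hD w
  obtain ⟨f, hf, m, hm, hfm⟩ := AddSubgroup.mem_sup.1
    (coeffSpan_le_barInvariants_sup hSL hL (isLowerSet_Iio w) ih hd.sub_mem)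
  refine ⟨d - f, by rw [map_sub, hd.bar_eq, mem_barInvariants.1 hf], ?_⟩
  rwa [sub_right_comm, ← hfm, add_sub_cancel_left]

end Existence

section Uniqueness

variable {b : Module.Basis I k M} {C : I → M}

lemma exists_repr_linearCombination_eq (hC : ∀ w, C w - b w ∈ coeffSpan S b (Set.Iio w))
    {e : I →₀ k} (he : e ≠ 0) :
    ∃ y, e y ≠ 0 ∧ b.repr (Finsupp.linearCombination k C e) y = e y := by
  obtain ⟨y, hy⟩ := e.support.exists_maximal (Finsupp.support_nonempty_iff.2 he)
  have h_coeff (z : I) (hz : ¬ y < z) : b.repr (C z) y = b.repr (b z) y := by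
    rw [← sub_eq_zero, ← Finsupp.sub_apply, ← map_sub]
    exact ((mem_coeffSpan_basis_iff b).1 (hC z) y).2 hz
  refine ⟨y, Finsupp.mem_support_iff.1 hy.prop, ?_⟩
  rw [Finsupp.linearCombination_apply, Finsupp.sum, map_sum, Finsupp.finsetSum_apply,
    Finset.sum_eq_single_of_mem y hy.prop]
  · simp [h_coeff y (lt_irrefl y)]
  · intro z hz hzy
    simp [h_coeff z (hy.not_gt hz), hzy]

lemma linearIndependent_of_unitriangular
    (hC : ∀ w, C w - b w ∈ coeffSpan S b (Set.Iio w)) : LinearIndependent k C := by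
  refine linearIndependent_iff.2 fun e he ↦ by_contra fun h_ne ↦ ?_
  obtain ⟨y, hy, hey⟩ := exists_repr_linearCombination_eq hC h_ne
  rw [he, map_zero, Finsupp.zero_apply] at hey
  exact hy hey.symm

lemma span_eq_top_of_unitriangular [WellFoundedLT I]
    (hC : ∀ w, C w - b w ∈ coeffSpan S b (Set.Iio w)) :
    Submodule.span k (Set.range C) = ⊤ := by
  rw [eq_top_iff, ← b.span_eq, Submodule.span_le, Set.range_subset_iff]
  intro w
  induction w using WellFoundedLT.induction with
  | _ w ih =>
  have h_lower : coeffSpan S b (Set.Iio w) ≤ (Submodule.span k (Set.range C)).toAddSubgroup :=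
    coeffSpan_le_iff.2 fun a _ y hy ↦ Submodule.smul_mem _ a (ih y hy)
  rw [← sub_sub_cancel (C w) (b w)]
  exact Submodule.sub_mem _ (Submodule.subset_span ⟨w, rfl⟩) (h_lower (hC w))

lemma eq_zero_of_mem_coeffSpan_of_bar_eq [WellFoundedLT I]
    (hC : ∀ w, IsBarInvariantLift bar S b w (C w))
    (hS : ∀ a ∈ S, σ a = a → a = 0) {t : Set I} {d : M} (hd : d ∈ coeffSpan S b t)
    (hbar : bar d = d) : d = 0 := by
  have hC_sub (w : I) := (hC w).sub_mem
  obtain ⟨e, rfl⟩ : ∃ e : I →₀ k, Finsupp.linearCombination k C e = d := by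
    rw [← LinearMap.mem_range, Finsupp.range_linearCombination,
      span_eq_top_of_unitriangular hC_sub]
    exact Submodule.mem_top
  have hσ : e.mapRange σ (map_zero σ) = e := by
    refine linearIndependent_of_unitriangular hC_sub (Eq.trans ?_ hbar)
    rw [Finsupp.linearCombination_apply, Finsupp.linearCombination_apply,
      Finsupp.sum_mapRange_index fun z ↦ zero_smul k (C z), map_finsuppSum]
    simp only [map_smulₛₗ, (hC _).bar_eq]
  by_contra h_ne
  obtain ⟨y, hy, hey⟩ := exists_repr_linearCombination_eq hC_sub
    (show e ≠ 0 by rintro rfl; exact h_ne (map_zero _))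
  refine hy (hS _ ?_ (DFunLike.congr_fun hσ y))
  rw [← hey]
  exact ((mem_coeffSpan_basis_iff b).1 hd y).1

/-- **Lusztig's lemma**. -/
theorem existsUnique_forall_isBarInvariantLift [WellFoundedLT I] (hSL : S ≤ L.toAddSubgroup)
    (hL : ∀ a ∈ L, ∃ a₀ ∈ L, σ a₀ = a₀ ∧ a - a₀ ∈ S) (hS : ∀ a ∈ S, σ a = a → a = 0)
    (hD : ∀ w, ∃ d, IsBarInvariantLift bar L.toAddSubgroup b w d) :
    ∃! C : I → M, ∀ w, IsBarInvariantLift bar S b w (C w) := by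
  choose C hC using exists_isBarInvariantLift hSL hL hD
  refine ⟨C, hC, fun C' hC' ↦ funext fun w ↦ sub_eq_zero.1 ?_⟩
  refine eq_zero_of_mem_coeffSpan_of_bar_eq hC hS (t := Set.Iio w) ?_ ?_
  · rw [← sub_sub_sub_cancel_right _ _ (b w)]
    exact sub_mem (hC' w).sub_mem (hC w).sub_mem
  · rw [map_sub, (hC' w).bar_eq, (hC w).bar_eq]

end Uniqueness

end CanonicalBasis

section Scalars

open Polynomial

variable {k : Type*} [CommRing k]

/-- The subring `ℤ[v, v⁻¹]` of `k`. -/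
def laurentSubring (v : kˣ) : Subring k :=
  (LaurentPolynomial.eval₂ (Int.castRingHom k) v).range

/-- The additive subgroup `vℤ[v]` of `k`. -/
def positivePart (v : k) : AddSubgroup k :=
  ((AddMonoidHom.mulLeft v).comp (aeval v : ℤ[X] →ₐ[ℤ] k).toAddMonoidHom).range

lemma mem_positivePart {v a : k} : a ∈ positivePart v ↔ ∃ p : ℤ[X], v * aeval v p = a :=
  Iff.rfl

lemma zpow_mem_laurentSubring (v : kˣ) (r : ℤ) : ((v ^ r : kˣ) : k) ∈ laurentSubring v :=
  ⟨LaurentPolynomial.T r, LaurentPolynomial.eval₂_T _ _ r⟩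

lemma coe_mem_laurentSubring (v : kˣ) : (v : k) ∈ laurentSubring v := by
  simpa only [zpow_one] using zpow_mem_laurentSubring v 1

lemma coe_inv_mem_laurentSubring (v : kˣ) : ((v⁻¹ : kˣ) : k) ∈ laurentSubring v := by
  simpa only [zpow_neg_one] using zpow_mem_laurentSubring v (-1)

lemma positivePart_le_laurentSubring (v : kˣ) :
    positivePart (v : k) ≤ (laurentSubring v).toAddSubgroup := by
  rintro _ ⟨p, rfl⟩
  exact ⟨(X * p).toLaurent, by
    rw [LaurentPolynomial.eval₂_toLaurent, eval₂_mul, eval₂_X]; rfl⟩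

lemma pow_succ_mem_positivePart (v : k) (r : ℕ) : v ^ (r + 1) ∈ positivePart v :=
  ⟨X ^ r, by simp [pow_succ']⟩

lemma map_zpow_eq_zpow_neg {v : kˣ} {σ : k →+* k} (hσ : σ v = ↑v⁻¹) (r : ℤ) :
    σ ((v ^ r : kˣ) : k) = ((v ^ (-r) : kˣ) : k) := by
  have h : Units.map (σ : k →* k) v = v⁻¹ := Units.ext hσ
  have h_pow := congrArg Units.val (map_zpow (Units.map (σ : k →* k)) v r)
  rwa [h, inv_zpow'] at h_pow

lemma exists_symmetric_sub_mem_positivePart {v : kˣ} {σ : k →+* k} (hσ : σ v = ↑v⁻¹) {a : k}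
    (ha : a ∈ laurentSubring v) :
    ∃ a₀ ∈ laurentSubring v, σ a₀ = a₀ ∧ a - a₀ ∈ positivePart (v : k) := by
  obtain ⟨f, rfl⟩ := ha
  induction f using LaurentPolynomial.induction_on' with
  | add f g hf hg =>
    obtain ⟨a, ha, haσ, hap⟩ := hf
    obtain ⟨b, hb, hbσ, hbp⟩ := hg
    refine ⟨a + b, add_mem ha hb, by rw [map_add, haσ, hbσ], ?_⟩
    rw [map_add, add_sub_add_comm]
    exact add_mem hap hbp
  | C_mul_T r c =>
    rw [LaurentPolynomial.eval₂_C_mul_T]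
    rcases lt_trichotomy r 0 with hr | rfl | hr
    · obtain ⟨l, hl⟩ : ∃ l : ℕ, -r = (l + 1 : ℕ) := ⟨(-r).toNat - 1, by lia⟩
      refine ⟨c * (↑(v ^ r) + ↑(v ^ (-r))), ?_, ?_, ?_⟩
      · exact mul_mem (intCast_mem _ c)
          (add_mem (zpow_mem_laurentSubring v r) (zpow_mem_laurentSubring v (-r)))
      · rw [map_mul, map_intCast, map_add, map_zpow_eq_zpow_neg hσ, map_zpow_eq_zpow_neg hσ,
          neg_neg, add_comm]
      · rw [eq_intCast, ← mul_sub, sub_add_cancel_left, mul_neg, hl, zpow_natCast, ← zsmul_eq_mul]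
        exact neg_mem (zsmul_mem (pow_succ_mem_positivePart (v : k) l) c)
    · exact ⟨c, intCast_mem _ c, map_intCast σ c, by simp⟩
    · obtain ⟨l, rfl⟩ : ∃ l : ℕ, r = (l + 1 : ℕ) := ⟨r.toNat - 1, by lia⟩
      refine ⟨0, zero_mem _, map_zero σ, ?_⟩
      rw [sub_zero, zpow_natCast]
      simpa using zsmul_mem (pow_succ_mem_positivePart (v : k) l) c

lemma eq_zero_of_mem_positivePart {v : kˣ} (hv : Transcendental ℤ (v : k)) {σ : k →+* k}
    (hσ : σ v = ↑v⁻¹) {a : k} (ha : a ∈ positivePart (v : k)) (haσ : σ a = a) : a = 0 := by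
  obtain ⟨p, rfl⟩ := mem_positivePart.1 ha
  set r : ℤ[X] := X * p with hr
  have hr_eval : (v : k) * aeval (v : k) p = aeval (v : k) r := by simp [hr]
  have hσ_eval : σ (aeval (v : k) r) = aeval ((v⁻¹ : kˣ) : k) r := by
    rw [← hσ, aeval_def, aeval_def, hom_eval₂, RingHom.ext_int (σ.comp _) (algebraMap ℤ k)]
  have h_rev : aeval (v : k) r.reverse = aeval (v : k) (X ^ r.natDegree * r) := by
    have h := eval₂_reverse_mul_pow (algebraMap ℤ k) ((v⁻¹ : kˣ) : k) r
    rw [invOf_units, inv_inv] at h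
    rw [hr_eval, hσ_eval, aeval_def, ← h, ← aeval_def] at haσ
    rw [map_mul, map_pow, aeval_X, ← haσ, mul_left_comm, ← mul_pow, Units.mul_inv, one_pow,
      mul_one]
  have h_deg := reverse_natDegree_le r
  rw [transcendental_iff_injective.1 hv h_rev] at h_deg
  by_contra h_ne
  have hp : p ≠ 0 := by rintro rfl; simp at h_ne
  rw [natDegree_X_pow_mul _ (mul_ne_zero X_ne_zero hp), hr, natDegree_X_mul hp] at h_deg
  lia

end Scalars

section BruhatOrder

open Equiv

variable {n : ℕ} {i j : Fin (n - 1)} {u w : Perm (Fin n)}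

/-- The smaller of the two points exchanged by the simple transposition `s n i`. -/
def leftPoint (i : Fin (n - 1)) : Fin n := ⟨i, by lia⟩

/-- The larger of the two points exchanged by the simple transposition `s n i`. -/
def rightPoint (i : Fin (n - 1)) : Fin n := ⟨i + 1, by lia⟩

lemma leftPoint_lt_rightPoint (i : Fin (n - 1)) : leftPoint i < rightPoint i :=
  Fin.lt_def.2 (Nat.lt_succ_self i)

lemma s_eq_swap (i : Fin (n - 1)) : s n i = swap (leftPoint i) (rightPoint i) := rfl

lemma s_inv (i : Fin (n - 1)) : (s n i)⁻¹ = s n i := swap_inv _ _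

lemma s_mul_s_mul (i : Fin (n - 1)) (w : Perm (Fin n)) : s n i * (s n i * w) = w :=
  swap_mul_self_mul _ _ w

lemma mul_s_mul_s (w : Perm (Fin n)) (i : Fin (n - 1)) : w * s n i * s n i = w :=
  mul_swap_mul_self _ _ w

lemma s_apply_lt_s_apply_or (i : Fin (n - 1)) {x y : Fin n} (h : x < y) :
    s n i x < s n i y ∨ x = leftPoint i ∧ y = rightPoint i := by
  simp only [s_eq_swap, swap_apply_def, leftPoint, rightPoint, Fin.ext_iff, Fin.lt_def] at *
  split_ifs <;> lia

lemma wordProd_cons (i : Fin (n - 1)) (l : List (Fin (n - 1))) :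
    wordProd n (i :: l) = s n i * wordProd n l := by
  simp [wordProd]

lemma wordProd_append (l l' : List (Fin (n - 1))) :
    wordProd n (l ++ l') = wordProd n l * wordProd n l' := by
  simp [wordProd]

lemma wordProd_singleton (i : Fin (n - 1)) : wordProd n [i] = s n i := by
  simp [wordProd]

lemma exists_wordProd_eq (w : Perm (Fin n)) : ∃ l, wordProd n l = w := by
  cases n with
  | zero => exact ⟨[], Subsingleton.elim _ _⟩
  | succ n =>
    have h : w ∈ Submonoid.closure (Set.range fun i : Fin n ↦ swap i.castSucc i.succ) := by
      simp only [Perm.mclosure_swap_castSucc_succ, Submonoid.mem_top]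
    induction h using Submonoid.closure_induction with
    | mem x hx =>
      obtain ⟨i, rfl⟩ := hx
      exact ⟨_, wordProd_singleton (n := n + 1) i⟩
    | one => exact ⟨[], rfl⟩
    | mul x y _ _ hx hy =>
      obtain ⟨l, rfl⟩ := hx
      obtain ⟨l', rfl⟩ := hy
      exact ⟨l ++ l', wordProd_append l l'⟩

lemma len_wordProd_le (l : List (Fin (n - 1))) : len n (wordProd n l) ≤ l.length :=
  Nat.sInf_le ⟨l, rfl, rfl⟩

lemma exists_reduced_word (w : Perm (Fin n)) :
    ∃ l : List (Fin (n - 1)), l.length = len n w ∧ wordProd n l = w := by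
  obtain ⟨l, hl⟩ := exists_wordProd_eq w
  exact Nat.sInf_mem (s := {k | ∃ l : List (Fin (n - 1)), l.length = k ∧ wordProd n l = w})
    ⟨_, l, rfl, hl⟩

lemma len_mul_s_le (w : Perm (Fin n)) (i : Fin (n - 1)) : len n (w * s n i) ≤ len n w + 1 := by
  obtain ⟨l, hl, rfl⟩ := exists_reduced_word w
  simpa [← hl, wordProd_append, wordProd_singleton] using len_wordProd_le (l ++ [i])

theorem exists_sublist_wordProd_eq_mul_swap (l : List (Fin (n - 1))) {a b : Fin n} (hab : a < b)
    (h : wordProd n l b < wordProd n l a) :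
    ∃ l' : List (Fin (n - 1)), l'.Sublist l ∧ l'.length + 1 = l.length ∧
      wordProd n l' = wordProd n l * swap a b := by
  induction l with
  | nil => exact absurd h hab.not_gt
  | cons i l ih =>
    rw [wordProd_cons] at h ⊢
    rcases lt_or_gt_of_ne ((wordProd n l).injective.ne hab.ne) with h_asc | h_desc
    · obtain ⟨h_left, h_right⟩ :=
        (s_apply_lt_s_apply_or i h_asc).resolve_left (lt_asymm h)
      refine ⟨l, List.sublist_cons_self i l, rfl, ?_⟩
      rw [mul_assoc, mul_swap_eq_swap_mul, h_left, h_right, ← s_eq_swap, s_mul_s_mul]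
    · obtain ⟨l', h_sub, h_len, h_eq⟩ := ih h_desc
      exact ⟨i :: l', h_sub.cons_cons i, congrArg (· + 1) h_len, by
        rw [wordProd_cons, h_eq, mul_assoc]⟩

/-- `w < w * s n i` in the Bruhat order, expressed in one-line notation. -/
def IsAscent (w : Perm (Fin n)) (i : Fin (n - 1)) : Prop :=
  w (leftPoint i) < w (rightPoint i)

lemma isAscent_mul_s_iff : IsAscent (w * s n i) i ↔ ¬ IsAscent w i := by
  have h_ne : w (leftPoint i) ≠ w (rightPoint i) := w.injective.ne (leftPoint_lt_rightPoint i).ne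
  simp only [IsAscent, s_eq_swap, Perm.mul_apply, swap_apply_left, swap_apply_right, not_lt]
  exact h_ne.symm.le_iff_lt.symm

/-- `w` is obtained from `u` by multiplication with a transposition that creates an inversion.
The Bruhat order is the reflexive transitive closure of this relation. -/
def BruhatStep (u w : Perm (Fin n)) : Prop :=
  ∃ a b, a < b ∧ u a < u b ∧ w = u * swap a b

lemma IsAscent.bruhatStep_mul_s (h : IsAscent w i) : BruhatStep w (w * s n i) :=
  ⟨_, _, leftPoint_lt_rightPoint i, h, rfl⟩

lemma IsAscent.bruhatStep_s_mul (h : IsAscent w⁻¹ i) : BruhatStep w (s n i * w) :=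
  ⟨_, _, h, by simp [leftPoint_lt_rightPoint], by simp [mul_swap_eq_swap_mul, s_eq_swap]⟩

namespace BruhatStep

lemma exists_sublist {l : List (Fin (n - 1))} (h : BruhatStep u (wordProd n l)) :
    ∃ l' : List (Fin (n - 1)), l'.Sublist l ∧ l'.length + 1 = l.length ∧ wordProd n l' = u := by
  obtain ⟨a, b, hab, hu, hw⟩ := h
  obtain ⟨l', h_sub, h_len, h_eq⟩ :=
    exists_sublist_wordProd_eq_mul_swap l hab (by simpa [hw] using hu)
  exact ⟨l', h_sub, h_len, by rw [h_eq, hw, mul_swap_mul_self]⟩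

lemma len_lt (h : BruhatStep u w) : len n u < len n w := by
  obtain ⟨l, hl, rfl⟩ := exists_reduced_word w
  obtain ⟨l', -, h_len, rfl⟩ := h.exists_sublist
  have := len_wordProd_le l'
  lia

lemma mul_s (h : BruhatStep u w) (i : Fin (n - 1)) :
    u * s n i = w ∨ BruhatStep (u * s n i) (w * s n i) := by
  obtain ⟨a, b, hab, hu, rfl⟩ := h
  rcases s_apply_lt_s_apply_or i hab with h_lt | ⟨rfl, rfl⟩
  · refine Or.inr ⟨_, _, h_lt, by simpa [s_eq_swap] using hu, ?_⟩
    rw [mul_assoc, mul_assoc, mul_swap_eq_swap_mul]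
    simp only [s_eq_swap, swap_apply_self]
  · exact Or.inl rfl

lemma s_mul (h : BruhatStep u w) (i : Fin (n - 1)) :
    s n i * u = w ∨ BruhatStep (s n i * u) (s n i * w) := by
  obtain ⟨a, b, hab, hu, rfl⟩ := h
  rcases s_apply_lt_s_apply_or i hu with h_lt | ⟨h_left, h_right⟩
  · exact Or.inr ⟨a, b, hab, h_lt, (mul_assoc _ _ _).symm⟩
  · exact Or.inl (by rw [mul_swap_eq_swap_mul, h_left, h_right, s_eq_swap])

end BruhatStep

lemma eq_or_len_lt_of_reflTransGen (h : Relation.ReflTransGen BruhatStep u w) :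
    u = w ∨ len n u < len n w := by
  induction h with
  | refl => exact Or.inl rfl
  | tail _ h ih => exact Or.inr (ih.elim (fun h_eq ↦ h_eq ▸ h.len_lt) h.len_lt.trans')

/-- The Bruhat order; `bruhatLE_iff_le` identifies it with the subword order `bruhatLE`. -/
local instance bruhatOrder : PartialOrder (Perm (Fin n)) where
  le := Relation.ReflTransGen BruhatStep
  le_refl _ := .refl
  le_trans _ _ _ := .trans
  le_antisymm _ _ h h' := (eq_or_len_lt_of_reflTransGen h).resolve_right fun h_lt ↦
    (eq_or_len_lt_of_reflTransGen h').elim (fun h_eq ↦ h_lt.ne (h_eq ▸ rfl)) h_lt.asymm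

lemma len_strictMono : StrictMono (len n) :=
  fun _ _ h ↦ (eq_or_len_lt_of_reflTransGen h.le).resolve_left h.ne

lemma BruhatStep.lt (h : BruhatStep u w) : u < w :=
  lt_of_le_of_ne (.single h) fun h_eq ↦ h.len_lt.ne (h_eq ▸ rfl)

lemma IsAscent.lt_mul_s (h : IsAscent w i) : w < w * s n i :=
  h.bruhatStep_mul_s.lt

lemma mul_s_lt_of_not_isAscent (h : ¬ IsAscent w i) : w * s n i < w := by
  simpa only [mul_s_mul_s] using (isAscent_mul_s_iff.2 h).lt_mul_s

lemma IsAscent.len_mul_s (h : IsAscent w i) : len n (w * s n i) = len n w + 1 :=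
  le_antisymm (len_mul_s_le w i) (len_strictMono h.lt_mul_s)

lemma mul_s_le_or (h : u ≤ w) (i : Fin (n - 1)) : u * s n i ≤ w ∨ u * s n i ≤ w * s n i := by
  induction h with
  | refl => exact Or.inr le_rfl
  | tail _ h_step ih =>
    rcases ih with ih | ih
    · exact Or.inl (ih.trans h_step.lt.le)
    · rcases h_step.mul_s i with rfl | h_step'
      · exact Or.inl ih
      · exact Or.inr (ih.trans h_step'.lt.le)

lemma le_s_mul_or (h : u ≤ w) (i : Fin (n - 1)) : u ≤ s n i * w ∨ s n i * u ≤ s n i * w := by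
  induction h using Relation.ReflTransGen.head_induction_on with
  | refl => exact Or.inr le_rfl
  | head h_step _ ih =>
    rcases ih with ih | ih
    · exact Or.inl (h_step.lt.le.trans ih)
    · rcases h_step.s_mul i with rfl | h_step'
      · exact Or.inl (by rwa [s_mul_s_mul] at ih)
      · exact Or.inr (h_step'.lt.le.trans ih)

lemma IsAscent.mul_s_le_mul_s (hw : IsAscent w i) (h : u ≤ w) : u * s n i ≤ w * s n i :=
  (mul_s_le_or h i).elim (fun h ↦ h.trans hw.lt_mul_s.le) id

lemma IsAscent.mul_s_lt_mul_s (hw : IsAscent w i) (h : u < w) : u * s n i < w * s n i :=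
  lt_of_le_of_ne (hw.mul_s_le_mul_s h.le) ((mul_left_injective _).ne h.ne)

lemma reduced_word_append_singleton {l : List (Fin (n - 1))}
    (h : (l ++ [i]).length = len n (wordProd n (l ++ [i]))) :
    l.length = len n (wordProd n l) ∧ IsAscent (wordProd n l) i := by
  rw [wordProd_append, wordProd_singleton, List.length_append, List.length_singleton] at h
  have h_le := len_mul_s_le (wordProd n l) i
  have h_word := len_wordProd_le l
  refine ⟨by lia, by_contra fun h_desc ↦ ?_⟩
  have h_lt := len_strictMono (mul_s_lt_of_not_isAscent h_desc)
  lia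

lemma exists_not_isAscent (hw : w ≠ 1) : ∃ i, ¬ IsAscent w i := by
  obtain ⟨l, hl, rfl⟩ := exists_reduced_word w
  rcases l.eq_nil_or_concat' with rfl | ⟨l, i, rfl⟩
  · exact absurd rfl hw
  · refine ⟨i, ?_⟩
    rw [← isAscent_mul_s_iff, wordProd_append, wordProd_singleton, mul_s_mul_s]
    exact (reduced_word_append_singleton hl).2

lemma exists_sublist_of_le {l : List (Fin (n - 1))} (h : u ≤ wordProd n l) :
    ∃ t : List (Fin (n - 1)), t.Sublist l ∧ wordProd n t = u := by
  generalize hw : wordProd n l = w at h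
  induction h generalizing l with
  | refl => exact ⟨l, List.Sublist.refl l, hw⟩
  | tail _ h_step ih =>
    subst hw
    obtain ⟨l', h_sub, -, h_eq⟩ := h_step.exists_sublist
    obtain ⟨t, ht, rfl⟩ := ih h_eq
    exact ⟨t, ht.trans h_sub, rfl⟩

lemma wordProd_le_of_sublist {l t : List (Fin (n - 1))} (hl : l.length = len n (wordProd n l))
    (ht : t.Sublist l) : wordProd n t ≤ wordProd n l := by
  induction l using List.reverseRecOn generalizing t with
  | nil => rw [List.sublist_nil.1 ht]
  | append_singleton l i ih =>
    obtain ⟨hl', h_asc⟩ := reduced_word_append_singleton hl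
    obtain ⟨t₁, t₂, rfl, ht₁, ht₂⟩ := List.sublist_append_iff.1 ht
    rw [wordProd_append l, wordProd_singleton]
    rcases List.sublist_singleton.1 ht₂ with rfl | rfl
    · rw [List.append_nil]
      exact (ih hl' ht₁).trans h_asc.lt_mul_s.le
    · rw [wordProd_append, wordProd_singleton]
      exact h_asc.mul_s_le_mul_s (ih hl' ht₁)

theorem bruhatLE_iff_le : bruhatLE n u w ↔ u ≤ w := by
  constructor
  · rintro ⟨l, hl, rfl, t, ht, rfl⟩
    exact wordProd_le_of_sublist hl ht
  · intro h
    obtain ⟨l, hl, rfl⟩ := exists_reduced_word w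
    exact ⟨l, hl, rfl, exists_sublist_of_le h⟩

lemma bruhatLT_iff_lt : bruhatLT n u w ↔ u < w := by
  rw [bruhatLT, bruhatLE_iff_le, lt_iff_le_and_ne]

section ShortestRepresentatives

variable {J : Finset (Fin (n - 1))}

lemma le_mul_of_mem_parab (h : ∀ j ∈ J, IsAscent w⁻¹ j) {x : Perm (Fin n)}
    (hx : x ∈ parab n J) : w ≤ x * w := by
  have h_gen (j) (hj : j ∈ J) (y : Perm (Fin n)) (hy : w ≤ y * w) : w ≤ s n j * y * w := by
    rw [mul_assoc]
    exact (le_s_mul_or hy j).elim id (h j hj).bruhatStep_s_mul.lt.le.trans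
  induction hx using Subgroup.closure_induction_left with
  | one => rw [one_mul]
  | mul_left _ hs y _ ih =>
    obtain ⟨j, hj, rfl⟩ := hs
    exact h_gen j hj y ih
  | inv_mul_cancel _ hs y _ ih =>
    obtain ⟨j, hj, rfl⟩ := hs
    rw [s_inv]
    exact h_gen j hj y ih

theorem isShort_iff : IsShort n J w ↔ ∀ j ∈ J, IsAscent w⁻¹ j := by
  refine ⟨fun h j hj ↦ by_contra fun h_desc ↦ ?_,
    fun h x hx ↦ len_strictMono.monotone (le_mul_of_mem_parab h hx)⟩
  have h_asc : IsAscent (s n j * w)⁻¹ j := by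
    rwa [mul_inv_rev, s_inv, isAscent_mul_s_iff]
  have h_lt := h_asc.bruhatStep_s_mul.len_lt
  rw [s_mul_s_mul] at h_lt
  exact h_lt.not_ge (h (s n j) (Subgroup.subset_closure ⟨j, hj, rfl⟩))

/-- Deodhar's lemma. -/
theorem IsShort.isShort_mul_s_or (h : IsShort n J w) (i : Fin (n - 1)) :
    IsShort n J (w * s n i) ∨ ∃ j ∈ J, w * s n i = s n j * w := by
  refine or_iff_not_imp_left.2 fun h' ↦ ?_
  rw [isShort_iff] at h h'
  push Not at h'
  obtain ⟨j, hj, h_desc⟩ := h'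
  rw [mul_inv_rev, s_inv] at h_desc
  obtain ⟨h_left, h_right⟩ := (s_apply_lt_s_apply_or i (h j hj)).resolve_left h_desc
  rw [Perm.inv_eq_iff_eq] at h_left h_right
  exact ⟨j, hj, by rw [s_eq_swap, mul_swap_eq_swap_mul, ← h_left, ← h_right, s_eq_swap]⟩

lemma IsShort.mul_s_of_not_isAscent (h : IsShort n J w) (h_desc : ¬ IsAscent w i) :
    IsShort n J (w * s n i) := by
  refine (h.isShort_mul_s_or i).resolve_right ?_
  rintro ⟨j, hj, h_eq⟩
  have h_lt := len_strictMono (mul_s_lt_of_not_isAscent h_desc)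
  rw [h_eq] at h_lt
  exact h_lt.not_ge (h (s n j) (Subgroup.subset_closure ⟨j, hj, rfl⟩))

end ShortestRepresentatives

end BruhatOrder

section PolynomialCoefficients

open Polynomial

variable {k M I : Type*} [CommRing k] [AddCommGroup M] [Module k M] [PartialOrder I] [Fintype I]

lemma sub_mem_coeffSpan_positivePart_iff (b : Module.Basis I k M) {v : k} {w : I} {c : M} :
    c - b w ∈ coeffSpan (positivePart v) b (Set.Iio w) ↔
      ∃ R : I → ℤ[X], (∀ y, ¬ y < w → R y = 0) ∧
        c = b w + ∑ y, (v * aeval v (R y)) • b y := by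
  simp only [← sub_eq_iff_eq_add']
  constructor
  · intro h
    have h_coeff (y : I) :
        ∃ p : ℤ[X], (¬ y < w → p = 0) ∧ v * aeval v p = b.repr (c - b w) y := by
      obtain ⟨⟨p, hp⟩, h_zero⟩ := (mem_coeffSpan_basis_iff b).1 h y
      by_cases hy : y < w
      · exact ⟨p, absurd hy, hp⟩
      · exact ⟨0, fun _ ↦ rfl, by rw [h_zero hy, map_zero, mul_zero]⟩
    choose R hR_zero hR using h_coeff
    exact ⟨R, hR_zero, by simp only [hR, b.sum_repr]⟩
  · rintro ⟨R, hR, h_eq⟩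
    rw [h_eq]
    refine sum_mem fun y _ ↦ ?_
    by_cases hy : y < w
    · exact smul_mem_coeffSpan (mem_positivePart.2 ⟨R y, rfl⟩) hy
    · simpa only [hR y hy, map_zero, mul_zero, zero_smul] using zero_mem _

end PolynomialCoefficients

section HeckeAlgebra

open Equiv

variable {n : ℕ} {k A : Type*} [CommRing k] [Ring A] [Algebra k A]

/-- The relations satisfied by the standard basis of the Hecke algebra of `S_n` with parameter
`v`, in the normalization `H_i ^ 2 = (v⁻¹ - v) H_i + 1`. -/
structure IsHeckeFamily (v : kˣ) (H : Perm (Fin n) → A) : Prop where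
  one : H 1 = 1
  mul_s : ∀ w i, len n (w * s n i) = len n w + 1 → H (w * s n i) = H w * H (s n i)
  mul_self : ∀ i, H (s n i) * H (s n i) = ((v⁻¹ : kˣ) - v : k) • H (s n i) + 1

/-- The Kazhdan–Lusztig generator `H_i + v`. -/
def klGenerator (v : kˣ) (H : Perm (Fin n) → A) (i : Fin (n - 1)) : A :=
  H (s n i) + (v : k) • 1

variable {v : kˣ} {H : Perm (Fin n) → A}

lemma bar_klGenerator (hH : IsHeckeFamily v H) {σ : k →+* k} (hσ : σ v = ↑v⁻¹) {bar : A →+* A}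
    (hbar_smul : ∀ (c : k) (x : A), bar (c • x) = σ c • bar x) {i : Fin (n - 1)}
    (hbar : bar (H (s n i)) * H (s n i) = 1) :
    bar (klGenerator v H i) = klGenerator v H i := by
  have h_inv : H (s n i) * (H (s n i) - ((v⁻¹ : kˣ) - v : k) • 1) = 1 := by
    rw [mul_sub, hH.mul_self, mul_smul_comm, mul_one, add_sub_cancel_left]
  rw [klGenerator, map_add, hbar_smul, hσ, map_one, left_inv_eq_right_inv hbar h_inv]
  module

namespace IsHeckeFamily

lemma map_wordProd (hH : IsHeckeFamily v H) {l : List (Fin (n - 1))}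
    (hl : l.length = len n (wordProd n l)) :
    H (wordProd n l) = (l.map fun i ↦ H (s n i)).prod := by
  induction l using List.reverseRecOn with
  | nil => exact hH.one
  | append_singleton l i ih =>
    obtain ⟨hl', h_asc⟩ := reduced_word_append_singleton hl
    rw [wordProd_append, wordProd_singleton, hH.mul_s _ _ h_asc.len_mul_s, ih hl',
      List.map_append, List.prod_append, List.map_singleton, List.prod_singleton]

lemma map_s_mul (hH : IsHeckeFamily v H) {w : Perm (Fin n)} {j : Fin (n - 1)}
    (h : len n (s n j * w) = len n w + 1) : H (s n j * w) = H (s n j) * H w := by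
  obtain ⟨l, hl, rfl⟩ := exists_reduced_word w
  have hl_cons : (j :: l).length = len n (wordProd n (j :: l)) := by
    rw [wordProd_cons, h, ← hl, List.length_cons]
  rw [← wordProd_cons, hH.map_wordProd hl_cons, hH.map_wordProd hl, List.map_cons,
    List.prod_cons]

lemma mul_klGenerator (hH : IsHeckeFamily v H) (w : Perm (Fin n)) (i : Fin (n - 1)) :
    H w * klGenerator v H i =
      H (w * s n i) + ((if IsAscent w i then v else v⁻¹ : kˣ) : k) • H w := by
  rw [klGenerator, mul_add, mul_smul_comm, mul_one]
  split_ifs with h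
  · rw [hH.mul_s w i h.len_mul_s]
  · have h_up := hH.mul_s _ _ (isAscent_mul_s_iff.2 h).len_mul_s
    rw [mul_s_mul_s] at h_up
    have h_down : H w * H (s n i) = ((v⁻¹ : kˣ) - v : k) • H w + H (w * s n i) := by
      rw [h_up, mul_assoc, hH.mul_self, mul_add, mul_smul_comm, mul_one]
    rw [h_down]
    module

end IsHeckeFamily

end HeckeAlgebra

section InducedModule

open Equiv MulOpposite

attribute [local instance] bruhatOrder

variable {n : ℕ} {k A M : Type*} [CommRing k] [Ring A] [Algebra k A] [AddCommGroup M] [Module k M]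
  [Module Aᵐᵒᵖ M] [IsScalarTower k Aᵐᵒᵖ M] {v : kˣ} {H : Perm (Fin n) → A}
  {J : Finset (Fin (n - 1))} {N : Perm (Fin n) → M}

lemma op_klGenerator_smul (hH : IsHeckeFamily v H) (hN : ∀ w, N w = op (H w) • N 1)
    (w : Perm (Fin n)) (i : Fin (n - 1)) :
    op (klGenerator v H i) • N w =
      N (w * s n i) + ((if IsAscent w i then v else v⁻¹ : kˣ) : k) • N w := by
  rw [hN w, hN (w * s n i), ← mul_smul, ← op_mul, hH.mul_klGenerator, op_add, op_smul, add_smul,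
    smul_assoc]

lemma map_s_mul_eq_smul (hH : IsHeckeFamily v H) (hN : ∀ w, N w = op (H w) • N 1) {a : k}
    {j : Fin (n - 1)} (ha : op (H (s n j)) • N 1 = a • N 1) {w : Perm (Fin n)}
    (h : len n (s n j * w) = len n w + 1) : N (s n j * w) = a • N w := by
  rw [hN, hH.map_s_mul h, op_mul, mul_smul, ha, smul_comm, ← hN]

lemma map_mul_s_mem_coeffSpan (hH : IsHeckeFamily v H) (hN : ∀ w, N w = op (H w) • N 1)
    (hJ : ∀ j ∈ J, ∃ a ∈ laurentSubring v, op (H (s n j)) • N 1 = a • N 1)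
    {t : Set {w // IsShort n J w}} {x : {w // IsShort n J w}} (hx : x ∈ t) {i : Fin (n - 1)}
    (hxs : ∀ y : {w // IsShort n J w}, y.1 = x.1 * s n i → y ∈ t) :
    N (x * s n i) ∈ coeffSpan (laurentSubring v).toAddSubgroup (fun y ↦ N y.1) t := by
  by_cases h_short : IsShort n J (x * s n i)
  · rw [← one_smul k (N _)]
    exact smul_mem_coeffSpan (laurentSubring v).one_mem (hxs ⟨_, h_short⟩ rfl)
  · have h_asc : IsAscent x.1 i := not_not.1 (mt x.2.mul_s_of_not_isAscent h_short)
    obtain ⟨j, hj, h_eq⟩ := (x.2.isShort_mul_s_or i).resolve_left h_short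
    obtain ⟨a, ha, h_act⟩ := hJ j hj
    rw [h_eq, map_s_mul_eq_smul hH hN h_act (h_eq ▸ h_asc.len_mul_s)]
    exact smul_mem_coeffSpan ha hx

lemma op_klGenerator_smul_mem_coeffSpan (hH : IsHeckeFamily v H)
    (hN : ∀ w, N w = op (H w) • N 1)
    (hJ : ∀ j ∈ J, ∃ a ∈ laurentSubring v, op (H (s n j)) • N 1 = a • N 1)
    {u w : {w // IsShort n J w}} {i : Fin (n - 1)} (h_asc : IsAscent u.1 i)
    (huw : u.1 * s n i = w.1) {m : M}
    (hm : m ∈ coeffSpan (laurentSubring v).toAddSubgroup (fun y ↦ N y.1) (Set.Iio u)) :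
    op (klGenerator v H i) • m ∈
      coeffSpan (laurentSubring v).toAddSubgroup (fun y ↦ N y.1) (Set.Iio w) := by
  suffices h : coeffSpan (laurentSubring v).toAddSubgroup (fun y ↦ N y.1) (Set.Iio u) ≤
      (coeffSpan (laurentSubring v).toAddSubgroup (fun y ↦ N y.1) (Set.Iio w)).comap
        (DistribSMul.toAddMonoidHom M (op (klGenerator v H i))) from h hm
  refine coeffSpan_le_iff.2 fun a ha x hxu ↦ ?_
  have hxw : x < w := hxu.trans (h_asc.lt_mul_s.trans_eq huw)
  rw [AddSubgroup.mem_comap, DistribSMul.toAddMonoidHom_apply, smul_comm]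
  refine smul_mem_coeffSpan_of_subring ha ?_
  rw [op_klGenerator_smul hH hN]
  refine add_mem (map_mul_s_mem_coeffSpan hH hN hJ hxw fun y hy ↦ ?_)
    (smul_mem_coeffSpan ?_ hxw)
  · rw [Set.mem_Iio, ← Subtype.coe_lt_coe, hy, ← huw]
    exact h_asc.mul_s_lt_mul_s hxu
  · split_ifs
    · exact coe_mem_laurentSubring v
    · exact coe_inv_mem_laurentSubring v

theorem exists_isBarInvariantLift_laurentSubring (hH : IsHeckeFamily v H)
    (hN : ∀ w, N w = op (H w) • N 1)
    (hJ : ∀ j ∈ J, ∃ a ∈ laurentSubring v, op (H (s n j)) • N 1 = a • N 1)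
    {σ : k →+* k} {barM : M →ₛₗ[σ] M} (hbar_one : barM (N 1) = N 1)
    (hbar_kl : ∀ i m, barM (op (klGenerator v H i) • m) = op (klGenerator v H i) • barM m)
    (w : {w // IsShort n J w}) :
    ∃ d, IsBarInvariantLift barM (laurentSubring v).toAddSubgroup (fun y ↦ N y.1) w d := by
  induction w using WellFoundedLT.induction with
  | _ w ih =>
  by_cases hw : w.1 = 1
  · exact ⟨N w, by rw [hw, hbar_one], by simpa only [sub_self] using zero_mem _⟩
  obtain ⟨i, hi⟩ := exists_not_isAscent hw
  let u : {w // IsShort n J w} := ⟨w.1 * s n i, w.2.mul_s_of_not_isAscent hi⟩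
  have h_asc : IsAscent u.1 i := isAscent_mul_s_iff.2 hi
  have huw : u.1 * s n i = w.1 := mul_s_mul_s _ _
  have hu_lt : u < w := mul_s_lt_of_not_isAscent hi
  obtain ⟨d, hd⟩ := ih u hu_lt
  refine ⟨op (klGenerator v H i) • d, by rw [hbar_kl, hd.bar_eq], ?_⟩
  have h_split : op (klGenerator v H i) • d - N w =
      op (klGenerator v H i) • (d - N u) + (v : k) • N u := by
    rw [smul_sub, op_klGenerator_smul hH hN, huw, if_pos h_asc]
    abel
  rw [h_split]
  refine add_mem (op_klGenerator_smul_mem_coeffSpan hH hN hJ h_asc huw hd.sub_mem)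
    (smul_mem_coeffSpan (coe_mem_laurentSubring v) hu_lt)

theorem statement1_general (hv : Transcendental ℤ (v : k)) {σ : k →+* k} (hσ : σ v = ↑v⁻¹)
    (hH : IsHeckeFamily v H) (bar : A →+* A)
    (hbar_smul : ∀ (c : k) (x : A), bar (c • x) = σ c • bar x)
    (hbar : ∀ i, bar (H (s n i)) * H (s n i) = 1)
    (hN : ∀ w, N w = op (H w) • N 1)
    (hJ : ∀ j ∈ J, ∃ a ∈ laurentSubring v, op (H (s n j)) • N 1 = a • N 1)
    (hNLI : LinearIndependent k fun w : {w // IsShort n J w} ↦ N w)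
    (hNspan : Submodule.span k (N '' {w | IsShort n J w}) = ⊤)
    (barM : M →ₛₗ[σ] M) (hbarM_op : ∀ (a : A) (m : M), barM (op a • m) = op (bar a) • barM m)
    (hbarM_one : barM (N 1) = N 1) :
    ∃! C : {w // IsShort n J w} → M,
      (LinearIndependent k C ∧ Submodule.span k (Set.range C) = ⊤) ∧
      (∀ w, barM (C w) = C w) ∧
      ∀ w, ∃ R : {w // IsShort n J w} → Polynomial ℤ,
        (∀ w', ¬ bruhatLT n w'.1 w.1 → R w' = 0) ∧
        C w = N w + ∑ w', ((v : k) * Polynomial.aeval (v : k) (R w')) • N w' := by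
  rw [Set.image_eq_range] at hNspan
  obtain ⟨b, hb⟩ : ∃ b : Module.Basis {w // IsShort n J w} k M, ∀ w, b w = N w.1 :=
    ⟨.mk hNLI hNspan.ge, Module.Basis.mk_apply _ _⟩
  have hbar_kl (i : Fin (n - 1)) (m : M) :
      barM (op (klGenerator v H i) • m) = op (klGenerator v H i) • barM m := by
    rw [hbarM_op, bar_klGenerator hH hσ hbar_smul (hbar i)]
  have h_lusztig : ∃! C : {w // IsShort n J w} → M,
      ∀ w, IsBarInvariantLift barM (positivePart (v : k)) b w (C w) := by
    refine existsUnique_forall_isBarInvariantLift (positivePart_le_laurentSubring v)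
      (fun a ↦ exists_symmetric_sub_mem_positivePart hσ)
      (fun a ↦ eq_zero_of_mem_positivePart hv hσ) fun w ↦ ?_
    rw [funext hb]
    exact exists_isBarInvariantLift_laurentSubring hH hN hJ hbarM_one hbar_kl w
  simp only [bruhatLT_iff_lt, Subtype.coe_lt_coe, ← hb, ← sub_mem_coeffSpan_positivePart_iff]
  exact (existsUnique_congr fun C ↦ ⟨fun h w ↦ ⟨h.2.1 w, h.2.2 w⟩, fun h ↦
    ⟨⟨linearIndependent_of_unitriangular fun w ↦ (h w).sub_mem,
      span_eq_top_of_unitriangular fun w ↦ (h w).sub_mem⟩,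
      fun w ↦ (h w).bar_eq, fun w ↦ (h w).sub_mem⟩⟩).2 h_lusztig

end InducedModule

lemma transcendental_q : Transcendental ℤ q :=
  RatFunc.transcendental_X.restrictScalars (algebraMap ℤ ℂ).injective_int

/-- There exists a unique basis `{N̲_w : w ∈ W^{p+q}}` of the mixed
induced module `M^p_q` consisting of bar-invariant elements such that
`N̲_w = N_w + Σ_{w' ≺ w} R_{w',w}(q)·N_{w'}` with `R_{w',w} ∈ q·ℤ[q]` for all `w' ≺ w`. -/
theorem statement1 (n : ℕ) (A : Type) [Ring A] [Algebra K A]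
    (H : Equiv.Perm (Fin n) → A)
    (hHLI : LinearIndependent K H)
    (hHspan : Submodule.span K (Set.range H) = ⊤)
    (hone : H 1 = 1)
    (hmul : ∀ (w : Equiv.Perm (Fin n)) (i : Fin (n - 1)),
      len n (w * s n i) = len n w + 1 → H (w * s n i) = H w * H (s n i))
    (hquad : ∀ i : Fin (n - 1),
      H (s n i) * H (s n i) = (q⁻¹ - q) • H (s n i) + 1)
    (barK : K →+* K) (hbarKq : barK q = q⁻¹)
    (hbarKc : ∀ z : ℂ, barK (algebraMap ℂ K z) = algebraMap ℂ K z)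
    (bar : A →+* A)
    (hbar_smul : ∀ (c : K) (x : A), bar (c • x) = barK c • bar x)
    (hbarH : ∀ w : Equiv.Perm (Fin n),
      bar (H w) * H w⁻¹ = 1 ∧ H w⁻¹ * bar (H w) = 1)
    -- the parabolic subgroups W_p and W_q, which commute with each other
    (P Q : Finset (Fin (n - 1)))
    (hPQ : ∀ i ∈ P, ∀ j ∈ Q, s n i * s n j = s n j * s n i)
    -- the module M^p_q, a right A-module
    (M : Type) [AddCommGroup M] [Module K M]
    (act : M → A → M)
    (hact_addl : ∀ (m m' : M) (a : A), act (m + m') a = act m a + act m' a)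
    (hact_addr : ∀ (m : M) (a b : A), act m (a + b) = act m a + act m b)
    (hact_smull : ∀ (c : K) (m : M) (a : A), act (c • m) a = c • act m a)
    (hact_smulr : ∀ (c : K) (m : M) (a : A), act m (c • a) = c • act m a)
    (hact_one : ∀ m : M, act m 1 = m)
    (hact_mul : ∀ (m : M) (a b : A), act m (a * b) = act (act m a) b)
    -- the standard basis N_w = (1 ⊗ 1) · H_w
    (N : Equiv.Perm (Fin n) → M)
    (hN : ∀ w, N w = act (N 1) (H w))
    (hgenP : ∀ i ∈ P, act (N 1) (H (s n i)) = (-q) • N 1)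
    (hgenQ : ∀ i ∈ Q, act (N 1) (H (s n i)) = q⁻¹ • N 1)
    (hNLI : LinearIndependent K
      (fun w : {w : Equiv.Perm (Fin n) // IsShort n (P ∪ Q) w} => N w))
    (hNspan : Submodule.span K (N '' {w | IsShort n (P ∪ Q) w}) = ⊤)
    -- the bar involution of M^p_q
    (barM : M → M)
    (hbarM_add : ∀ m m' : M, barM (m + m') = barM m + barM m')
    (hbarM_smul : ∀ (c : K) (m : M), barM (c • m) = barK c • barM m)
    (hbarM_act : ∀ (m : M) (a : A), barM (act m a) = act (barM m) (bar a))
    (hbarM_one : barM (N 1) = N 1) :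
    ∃! C : {w : Equiv.Perm (Fin n) // IsShort n (P ∪ Q) w} → M,
      (LinearIndependent K C ∧ Submodule.span K (Set.range C) = ⊤) ∧
      (∀ w, barM (C w) = C w) ∧
      (∀ w, ∃ R : {w : Equiv.Perm (Fin n) // IsShort n (P ∪ Q) w} → Polynomial ℤ,
        (∀ w', ¬ bruhatLT n w'.1 w.1 → R w' = 0) ∧
        C w = N w + ∑ w' : {w : Equiv.Perm (Fin n) // IsShort n (P ∪ Q) w},
          (q * Polynomial.aeval q (R w')) • N w') := by
  let _ : SMul Aᵐᵒᵖ M := ⟨fun a m ↦ act m a.unop⟩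
  let _ : Module Aᵐᵒᵖ M := .ofMinimalAxioms (fun a m m' ↦ hact_addl m m' a.unop)
    (fun a a' m ↦ hact_addr m a.unop a'.unop) (fun a a' m ↦ hact_mul m a'.unop a.unop) hact_one
  have : IsScalarTower K Aᵐᵒᵖ M := ⟨fun c a m ↦ hact_smulr c m a.unop⟩
  let v : Kˣ := Units.mk0 q RatFunc.X_ne_zero
  have hJ : ∀ j ∈ P ∪ Q, ∃ a ∈ laurentSubring v, act (N 1) (H (s n j)) = a • N 1 := fun j hj ↦
    (Finset.mem_union.1 hj).elim
      (fun hj ↦ ⟨_, neg_mem (coe_mem_laurentSubring v), hgenP j hj⟩)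
      fun hj ↦ ⟨_, coe_inv_mem_laurentSubring v, hgenQ j hj⟩
  -- `RatFunc` carries a `ℤ`-algebra structure of its own, which is not defeq to the canonical one.
  have h_alg : RatFunc.instAlgebraOfPolynomial ℂ ℤ = Ring.toIntAlgebra K := Subsingleton.elim _ _
  have hq := transcendental_q
  rw [h_alg] at hq ⊢
  exact statement1_general (v := v) hq hbarKq ⟨hone, hmul, hquad⟩ bar hbar_smul
    (fun i ↦ s_inv i ▸ (hbarH (s n i)).1) hN hJ hNLI hNspan
    { toFun := barM, map_add' := hbarM_add, map_smul' := hbarM_smul }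
    (fun a m ↦ hbarM_act m a) hbarM_one
end
end

section
/- Let W_{q'} ⊆ W_q be a parabolic subgroup, let W^{q'}∩W_q denote the set of shortest coset representatives for W_{q'}\W_q and w^{q'}_q its longest element. The map i : M^p_q → M^p_{q'} defined by i(N_w) = Σ_{x ∈ W^{q'}∩W_q} q^{l(w^{q'}_q) - l(x)}·N_{xw} (note that xw ∈ W^{p+q'} for w ∈ W^{p+q} and x ∈ W^{q'}∩W_q) is an injective homomorphism of right H_n-modules, commutes with the bar involutions, and sends the canonical basis element N̲_w of M^p_q to the canonical basis element N̲_{w^{q'}_q w} of M^p_{q'}, for every w ∈ W^{p+q}. -/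
open scoped Classical

noncomputable section

/-- `C` is the canonical basis of the mixed induced module with standard basis `N`
(indexed by the permutations satisfying `short`) and bar involution `barM`:
each `C w` is bar-invariant and `C w = N w + Σ_{w' ≺ w} R(q)·N_{w'}` with `R ∈ q·ℤ[q]`. -/
def IsCanonBasis (n : ℕ) {M : Type} [AddCommGroup M] [Module K M]
    (short : Equiv.Perm (Fin n) → Prop) (N : Equiv.Perm (Fin n) → M)
    (barM : M → M) (C : Equiv.Perm (Fin n) → M) : Prop :=
  ∀ w, short w →
    barM (C w) = C w ∧
    ∃ R : Equiv.Perm (Fin n) → Polynomial ℤ,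
      (∀ w', ¬ (short w' ∧ bruhatLT n w' w) → R w' = 0) ∧
      C w = N w + ∑ w' : Equiv.Perm (Fin n), (q * Polynomial.aeval q (R w')) • N w'

/-!
STATEMENT 3: The map `i : M^p_q → M^p_{q'}`, `N_w ↦ Σ_{x ∈ W^{q'}∩W_q} q^{ℓ(w^{q'}_q)-ℓ(x)} N_{xw}`,
is an injective homomorphism of right `H_n`-modules commuting with the bar involutions and
sending the canonical basis element `N̲_w` to the canonical basis element `N̲_{w^{q'}_q w}`.
-/

/-!
Let `E_J` be the symmetrizer of `W_J`, on which the `H_j` with `j ∈ J` act by `q⁻¹`, and let `D` be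
the corresponding sum over `W^{Q'} ∩ W_Q`, so that `E_Q = E_{Q'} D`. In the target module `E_{Q'}`
acts on `N'_1` by the Poincaré polynomial of `W_{Q'}`, so `v = N'_1 · D` is a nonzero multiple of
`N'_1 · E_Q`. As `E_Q` and the Poincaré polynomial are bar-invariant and `E_Q` commutes with the
`H_i` for `i ∈ P`, the vector `v` is bar-invariant and spans a copy of `sgn_P ⊠ trv_Q`; by Frobenius
reciprocity there is a homomorphism with `N_1 ↦ v`. The longest element `w₀` of `W^{Q'} ∩ W_Q` is
unique, so the image of `N_w` is `N'_{w₀ w}` up to coefficients in `q ℤ[q]`. Hence the image of the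
canonical basis element at `w` is bar-invariant with leading term `N'_{w₀ w}`, and a bar-invariant
vector with coefficients in `q ℤ[q]` is zero.
-/

namespace MixedHecke

open Equiv (Perm)
open scoped RightActions

/-! ### Length and exchange in the symmetric group -/

section Length

variable {n : ℕ} {w x : Perm (Fin n)}

lemma s_mul_self (i : Fin (n - 1)) : s n i * s n i = 1 := by
  simp [s]

lemma s_inv (i : Fin (n - 1)) : (s n i)⁻¹ = s n i := by
  simp [s]

lemma s_mul_s_mul (i : Fin (n - 1)) (w : Perm (Fin n)) : s n i * (s n i * w) = w := by
  rw [← mul_assoc, s_mul_self, one_mul]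

lemma mul_s_mul_s (w : Perm (Fin n)) (i : Fin (n - 1)) : w * s n i * s n i = w := by
  rw [mul_assoc, s_mul_self, mul_one]

lemma s_injective : Function.Injective (s n) := by
  intro i j hij
  have hi : s n i ⟨i, by omega⟩ = ⟨i + 1, by omega⟩ := Equiv.swap_apply_left _ _
  rw [hij, s, Equiv.swap_apply_def] at hi
  split_ifs at hi <;> simp only [Fin.ext_iff] at * <;> omega

lemma sign_s (i : Fin (n - 1)) : Perm.sign (s n i) = -1 :=
  Perm.sign_swap (by simp [Fin.ext_iff])

@[simp] lemma wordProd_nil : wordProd n [] = 1 := by simp [wordProd]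

@[simp] lemma wordProd_cons (i : Fin (n - 1)) (t : List (Fin (n - 1))) :
    wordProd n (i :: t) = s n i * wordProd n t := by simp [wordProd]

@[simp] lemma wordProd_append (t u : List (Fin (n - 1))) :
    wordProd n (t ++ u) = wordProd n t * wordProd n u := by simp [wordProd]

lemma wordProd_reverse (t : List (Fin (n - 1))) :
    wordProd n t.reverse = (wordProd n t)⁻¹ := by
  induction t with
  | nil => simp
  | cons i t ih => simp [ih, s_inv]

lemma sign_wordProd (t : List (Fin (n - 1))) :
    Perm.sign (wordProd n t) = (-1) ^ t.length := by
  induction t with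
  | nil => simp
  | cons i t ih => simp [ih, sign_s, pow_succ]

lemma wordProd_surjective : Function.Surjective (wordProd n) := by
  intro w
  cases n with
  | zero => exact ⟨[], Subsingleton.elim _ _⟩
  | succ n =>
    have hw : w ∈ Submonoid.closure
        (Set.range fun i : Fin n ↦ Equiv.swap i.castSucc i.succ) := by
      rw [Perm.mclosure_swap_castSucc_succ]
      exact Submonoid.mem_top w
    induction hw using Submonoid.closure_induction with
    | mem _ hx =>
      obtain ⟨i, rfl⟩ := hx
      exact ⟨[i], by rw [wordProd_cons, wordProd_nil, mul_one]; rfl⟩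
    | one => exact ⟨[], wordProd_nil⟩
    | mul _ _ _ _ hx hy =>
      obtain ⟨t, rfl⟩ := hx
      obtain ⟨u, rfl⟩ := hy
      exact ⟨t ++ u, wordProd_append t u⟩

lemma exists_reduced_word (w : Perm (Fin n)) :
    ∃ t : List (Fin (n - 1)), t.length = len n w ∧ wordProd n t = w := by
  obtain ⟨t, ht⟩ := wordProd_surjective w
  exact Nat.sInf_mem (s := {k | ∃ l : List (Fin (n - 1)), l.length = k ∧ wordProd n l = w})
    ⟨t.length, t, rfl, ht⟩

lemma len_wordProd_le (t : List (Fin (n - 1))) : len n (wordProd n t) ≤ t.length :=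
  Nat.sInf_le ⟨t, rfl, rfl⟩

@[simp] lemma len_one : len n (1 : Perm (Fin n)) = 0 := by
  simpa using len_wordProd_le (n := n) []

lemma eq_one_of_len_eq_zero (h : len n w = 0) : w = 1 := by
  obtain ⟨t, ht, rfl⟩ := exists_reduced_word w
  rw [h, List.length_eq_zero_iff] at ht
  rw [ht, wordProd_nil]

lemma len_mul_le (u w : Perm (Fin n)) : len n (u * w) ≤ len n u + len n w := by
  obtain ⟨t, ht, rfl⟩ := exists_reduced_word u
  obtain ⟨t', ht', rfl⟩ := exists_reduced_word w
  rw [← ht, ← ht', ← List.length_append, ← wordProd_append]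
  exact len_wordProd_le _

lemma len_inv (w : Perm (Fin n)) : len n w⁻¹ = len n w := by
  have hle (w : Perm (Fin n)) : len n w⁻¹ ≤ len n w := by
    obtain ⟨t, ht, rfl⟩ := exists_reduced_word w
    rw [← ht, ← wordProd_reverse, ← List.length_reverse]
    exact len_wordProd_le _
  exact le_antisymm (hle w) (by simpa using hle w⁻¹)

lemma sign_eq_neg_one_pow_len (w : Perm (Fin n)) : Perm.sign w = (-1) ^ len n w := by
  obtain ⟨t, ht, htw⟩ := exists_reduced_word w
  rw [← ht, ← sign_wordProd, htw]

lemma len_s_le_one (i : Fin (n - 1)) : len n (s n i) ≤ 1 := by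
  simpa using len_wordProd_le [i]

lemma len_s_mul (i : Fin (n - 1)) (w : Perm (Fin n)) :
    len n (s n i * w) = len n w + 1 ∨ len n w = len n (s n i * w) + 1 := by
  have hle := len_mul_le (s n i) w
  have hge := len_mul_le (s n i) (s n i * w)
  rw [s_mul_s_mul] at hge
  have hs := len_s_le_one i
  have hne : len n (s n i * w) ≠ len n w := by
    intro h
    have hsign : Perm.sign (s n i * w) = Perm.sign w := by
      rw [sign_eq_neg_one_pow_len, h, ← sign_eq_neg_one_pow_len]
    rw [Perm.sign_mul, sign_s, mul_eq_right] at hsign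
    exact absurd hsign (by decide)
  omega

lemma len_mul_s (w : Perm (Fin n)) (i : Fin (n - 1)) :
    len n (w * s n i) = len n w + 1 ∨ len n w = len n (w * s n i) + 1 := by
  have h := len_s_mul i w⁻¹
  rwa [← s_inv, ← mul_inv_rev, len_inv, len_inv] at h

lemma len_s (i : Fin (n - 1)) : len n (s n i) = 1 := by
  have h := len_s_mul i 1
  rw [mul_one, len_one] at h
  omega

lemma swap_eq_s_of_s_apply_lt {i : Fin (n - 1)} {a b : Fin n} (hab : a < b)
    (h : s n i b < s n i a) : Equiv.swap a b = s n i := by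
  suffices (a : ℕ) = i ∧ (b : ℕ) = i + 1 by
    unfold s
    congr 1
    exacts [Fin.ext this.1, Fin.ext this.2]
  rw [s, Equiv.swap_apply_def, Equiv.swap_apply_def] at h
  rw [Fin.lt_def] at hab
  split_ifs at h <;> simp only [Fin.ext_iff, Fin.lt_def] at * <;> omega

lemma exists_swap_mul_wordProd_eq_eraseIdx (t : List (Fin (n - 1))) {a b : Fin n} (hab : a < b)
    (h : (wordProd n t)⁻¹ b < (wordProd n t)⁻¹ a) :
    ∃ k < t.length, Equiv.swap a b * wordProd n t = wordProd n (t.eraseIdx k) := by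
  induction t generalizing a b with
  | nil => exact absurd hab (by simpa using h.le)
  | cons i t ih =>
    rcases lt_or_gt_of_ne ((s n i).injective.ne hab.ne) with hs | hs
    · rw [wordProd_cons, mul_inv_rev, s_inv, Perm.mul_apply, Perm.mul_apply] at h
      obtain ⟨k, hk, hkt⟩ := ih hs h
      refine ⟨k + 1, by simpa using hk, ?_⟩
      rw [List.eraseIdx_cons_succ, wordProd_cons, wordProd_cons, ← hkt, ← mul_assoc,
        Equiv.swap_mul_eq_mul_swap, s_inv, mul_assoc]
    · refine ⟨0, by simp, ?_⟩
      rw [swap_eq_s_of_s_apply_lt hab hs, wordProd_cons, s_mul_s_mul]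
      rfl

/-- The inversion criterion turns the length hypothesis into the one of strong exchange: were the
values of `w⁻¹` in increasing order, then a reduced word of `s n i * w` could be shortened to a
word for `w`. -/
lemma exists_s_mul_wordProd_eq_eraseIdx {i : Fin (n - 1)} (t : List (Fin (n - 1)))
    (h : len n (s n i * wordProd n t) < len n (wordProd n t)) :
    ∃ k < t.length, s n i * wordProd n t = wordProd n (t.eraseIdx k) := by
  have hlt : (⟨i, by omega⟩ : Fin n) < ⟨i + 1, by omega⟩ := Fin.lt_def.2 (Nat.lt_succ_self _)
  by_contra hne
  have hinv := mt (exists_swap_mul_wordProd_eq_eraseIdx t hlt) hne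
  obtain ⟨u, hu, hut⟩ := exists_reduced_word (s n i * wordProd n t)
  obtain ⟨k, hk, hku⟩ := exists_swap_mul_wordProd_eq_eraseIdx u hlt (by
    rw [hut, mul_inv_rev, s_inv, Perm.mul_apply, Perm.mul_apply, s, Equiv.swap_apply_left,
      Equiv.swap_apply_right]
    exact lt_of_le_of_ne (not_lt.1 hinv) ((wordProd n t)⁻¹.injective.ne hlt.ne))
  have hle := len_wordProd_le (u.eraseIdx k)
  rw [← hku, hut, List.length_eraseIdx_of_lt hk] at hle
  change len n (s n i * (s n i * wordProd n t)) ≤ _ at hle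
  rw [s_mul_s_mul] at hle
  omega

lemma len_lt_of_len_s_mul_mul_lt {i : Fin (n - 1)} {x v : Perm (Fin n)}
    (h : len n (s n i * (x * v)) < len n (x * v)) :
    len n (s n i * x) < len n x ∨ len n (x⁻¹ * s n i * x * v) < len n v := by
  obtain ⟨tx, hx, rfl⟩ := exists_reduced_word x
  obtain ⟨tv, hv, rfl⟩ := exists_reduced_word v
  rw [← wordProd_append] at h
  obtain ⟨k, hk, hkt⟩ := exists_s_mul_wordProd_eq_eraseIdx _ h
  rw [List.length_append] at hk
  rcases lt_or_ge k tx.length with hkx | hkx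
  · left
    rw [List.eraseIdx_append_of_lt_length hkx, wordProd_append, wordProd_append, ← mul_assoc,
      mul_left_inj] at hkt
    have hle := len_wordProd_le (tx.eraseIdx k)
    rw [List.length_eraseIdx_of_lt hkx] at hle
    rw [hkt]
    omega
  · right
    rw [List.eraseIdx_append_of_length_le hkx, wordProd_append, wordProd_append,
      ← inv_mul_eq_iff_eq_mul, ← mul_assoc, ← mul_assoc] at hkt
    have hle := len_wordProd_le (tv.eraseIdx (k - tx.length))
    rw [List.length_eraseIdx_of_lt (by omega)] at hle
    rw [hkt]
    omega

end Length

/-! ### Parabolic subgroups and shortest coset representatives -/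

section Parabolic

variable {n : ℕ} {J J' : Finset (Fin (n - 1))} {w x : Perm (Fin n)}

lemma s_mem_parab {i : Fin (n - 1)} (hi : i ∈ J) : s n i ∈ parab n J :=
  Subgroup.subset_closure ⟨i, hi, rfl⟩

lemma wordProd_mem_parab {t : List (Fin (n - 1))} (ht : ∀ i ∈ t, i ∈ J) :
    wordProd n t ∈ parab n J :=
  list_prod_mem fun _ hx ↦ by
    obtain ⟨i, hi, rfl⟩ := List.mem_map.1 hx
    exact s_mem_parab (ht i hi)

lemma parab_mono (h : J' ⊆ J) : parab n J' ≤ parab n J :=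
  Subgroup.closure_mono fun _ ⟨i, hi, hx⟩ ↦ ⟨i, h hi, hx⟩

lemma exists_reduced_word_of_mem_parab (hx : x ∈ parab n J) :
    ∃ t : List (Fin (n - 1)), (∀ i ∈ t, i ∈ J) ∧ t.length = len n x ∧ wordProd n t = x := by
  have s_mul (i : Fin (n - 1)) (hi : i ∈ J) (y : Perm (Fin n)) :
      (∃ t : List (Fin (n - 1)), (∀ j ∈ t, j ∈ J) ∧ t.length = len n y ∧ wordProd n t = y) →
      ∃ t : List (Fin (n - 1)), (∀ j ∈ t, j ∈ J) ∧ t.length = len n (s n i * y) ∧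
        wordProd n t = s n i * y := by
    rintro ⟨t, htJ, htl, rfl⟩
    rcases len_s_mul i (wordProd n t) with h | h
    · exact ⟨i :: t, List.forall_mem_cons.2 ⟨hi, htJ⟩, by rw [List.length_cons, htl, h],
        wordProd_cons i t⟩
    · obtain ⟨k, hk, hkt⟩ := exists_s_mul_wordProd_eq_eraseIdx (i := i) t (by omega)
      refine ⟨t.eraseIdx k, fun j hj ↦ htJ j (List.mem_of_mem_eraseIdx hj), ?_, hkt.symm⟩
      rw [List.length_eraseIdx_of_lt hk]
      omega
  rw [parab] at hx
  induction hx using Subgroup.closure_induction_left with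
  | one => exact ⟨[], by simp, by simp, by simp⟩
  | mul_left x hx y _ ih =>
    obtain ⟨i, hi, rfl⟩ := hx
    exact s_mul i hi y ih
  | inv_mul_cancel x hx y _ ih =>
    obtain ⟨i, hi, rfl⟩ := hx
    rw [s_inv]
    exact s_mul i hi y ih

lemma s_mem_parab_iff {i : Fin (n - 1)} : s n i ∈ parab n J ↔ i ∈ J := by
  refine ⟨fun h ↦ ?_, s_mem_parab⟩
  obtain ⟨t, htJ, htl, hti⟩ := exists_reduced_word_of_mem_parab h
  rw [len_s, List.length_eq_one_iff] at htl
  obtain ⟨j, rfl⟩ := htl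
  rw [wordProd_cons, wordProd_nil, mul_one] at hti
  rw [← s_injective hti]
  exact htJ j List.mem_cons_self

@[elab_as_elim]
lemma parab_induction {p : (x : Perm (Fin n)) → x ∈ parab n J → Prop} (one : p 1 (one_mem _))
    (s_mul : ∀ (i : Fin (n - 1)) (hi : i ∈ J) (x : Perm (Fin n)) (hx : x ∈ parab n J),
      len n (s n i * x) = len n x + 1 → p x hx → p (s n i * x) (mul_mem (s_mem_parab hi) hx))
    {x : Perm (Fin n)} (hx : x ∈ parab n J) : p x hx := by
  obtain ⟨t, htJ, htl, rfl⟩ := exists_reduced_word_of_mem_parab hx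
  induction t with
  | nil => simpa only [wordProd_nil] using one
  | cons i t ih =>
    obtain ⟨hi, ht⟩ := List.forall_mem_cons.1 htJ
    have hle := len_wordProd_le t
    have hcases := len_s_mul i (wordProd n t)
    rw [List.length_cons, wordProd_cons] at htl
    simpa only [wordProd_cons] using
      s_mul i hi _ (wordProd_mem_parab ht) (by omega) (ih ht (wordProd_mem_parab ht) (by omega))

@[elab_as_elim]
lemma perm_induction_right {p : Perm (Fin n) → Prop} (one : p 1)
    (mul_s : ∀ (x : Perm (Fin n)) (i : Fin (n - 1)),
      len n (x * s n i) = len n x + 1 → p x → p (x * s n i))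
    (w : Perm (Fin n)) : p w := by
  obtain ⟨t, ht, rfl⟩ := exists_reduced_word w
  induction t using List.reverseRecOn with
  | nil => simpa only [wordProd_nil] using one
  | append_singleton t i ih =>
    have hle := len_wordProd_le t
    have hcases := len_mul_s (wordProd n t) i
    rw [List.length_append, List.length_singleton] at ht
    rw [wordProd_append, wordProd_cons, wordProd_nil, mul_one] at ht ⊢
    exact mul_s _ _ (by omega) (ih (by omega))

lemma _root_.IsShort.len_mul (hw : IsShort n J w) (hx : x ∈ parab n J) :
    len n (x * w) = len n x + len n w := by
  induction hx using parab_induction with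
  | one => rw [one_mul, len_one, zero_add]
  | s_mul i hi x hx hlen ih =>
    rw [mul_assoc]
    rcases len_s_mul i (x * w) with h | h
    · omega
    · rcases len_lt_of_len_s_mul_mul_lt (i := i) (x := x) (v := w) (by omega) with h' | h'
      · omega
      · have hle := hw _ (mul_mem (mul_mem (inv_mem hx) (s_mem_parab hi)) hx)
        omega

lemma exists_mul_isShort (J : Finset (Fin (n - 1))) (w : Perm (Fin n)) :
    ∃ x ∈ parab n J, ∃ d, IsShort n J d ∧ x * d = w := by
  obtain ⟨x, hx, hmin⟩ := Set.exists_min_image (parab n J : Set (Perm (Fin n)))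
    (fun x ↦ len n (x * w)) (Set.toFinite _) ⟨1, one_mem _⟩
  refine ⟨x⁻¹, inv_mem hx, x * w, fun y hy ↦ ?_, inv_mul_cancel_left x w⟩
  rw [← mul_assoc]
  exact hmin _ (mul_mem hy hx)

lemma _root_.IsShort.eq_of_mul_eq {d d' x' : Perm (Fin n)} (hd : IsShort n J d)
    (hd' : IsShort n J d') (hx : x ∈ parab n J) (hx' : x' ∈ parab n J)
    (h : x * d = x' * d') : d = d' := by
  have hd_eq : d = x⁻¹ * x' * d' := by rw [mul_assoc, ← h, inv_mul_cancel_left]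
  have hd'_eq : d' = x'⁻¹ * x * d := by rw [mul_assoc, h, inv_mul_cancel_left]
  have hlen := hd'.len_mul (mul_mem (inv_mem hx) hx')
  have hlen' := hd.len_mul (mul_mem (inv_mem hx') hx)
  rw [← hd_eq] at hlen
  rw [← hd'_eq] at hlen'
  rw [hd_eq, eq_one_of_len_eq_zero (w := x⁻¹ * x') (by omega), one_mul]

lemma isShort_iff_forall_s : IsShort n J w ↔ ∀ i ∈ J, len n w ≤ len n (s n i * w) := by
  refine ⟨fun hw i hi ↦ hw _ (s_mem_parab hi), fun h ↦ ?_⟩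
  obtain ⟨x, hx, d, hd, rfl⟩ := exists_mul_isShort J w
  obtain ⟨t, htJ, htl, rfl⟩ := exists_reduced_word_of_mem_parab hx
  cases t with
  | nil => rwa [wordProd_nil, one_mul]
  | cons i t =>
    obtain ⟨hi, ht⟩ := List.forall_mem_cons.1 htJ
    have hle := h i hi
    have hlen := hd.len_mul hx
    have hlen' := hd.len_mul (wordProd_mem_parab ht)
    have hle' := len_wordProd_le t
    rw [List.length_cons] at htl
    rw [hlen, ← mul_assoc, wordProd_cons, s_mul_s_mul, hlen', ← wordProd_cons] at hle
    omega

lemma isShort_union_iff :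
    IsShort n (J ∪ J') w ↔ IsShort n J w ∧ IsShort n J' w := by
  simp only [isShort_iff_forall_s, Finset.forall_mem_union]

lemma isShort_of_disjoint (hd : Disjoint J J') (hx : x ∈ parab n J') : IsShort n J x := by
  refine isShort_iff_forall_s.2 fun i hi ↦ ?_
  by_contra! hlt
  obtain ⟨t, htJ, -, rfl⟩ := exists_reduced_word_of_mem_parab hx
  obtain ⟨k, -, hk⟩ := exists_s_mul_wordProd_eq_eraseIdx t hlt
  have hmem : s n i * wordProd n t ∈ parab n J' := by
    rw [hk]
    exact wordProd_mem_parab fun j hj ↦ htJ j (List.mem_of_mem_eraseIdx hj)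
  exact Finset.disjoint_left.1 hd hi (s_mem_parab_iff.1 ((mul_mem_cancel_right hx).1 hmem))

lemma _root_.IsShort.mul (hw : IsShort n J w) (hJ : J' ⊆ J) (hx : x ∈ parab n J)
    (hxs : IsShort n J' x) : IsShort n J' (x * w) := by
  intro y hy
  rw [← mul_assoc, hw.len_mul hx, hw.len_mul (mul_mem (parab_mono hJ hy) hx)]
  exact Nat.add_le_add_right (hxs y hy) _

lemma exists_longest (J : Finset (Fin (n - 1))) :
    ∃ w ∈ parab n J, ∀ x ∈ parab n J, len n w = len n x + len n (x⁻¹ * w) := by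
  obtain ⟨w, hw, hmax⟩ := Set.exists_max_image (parab n J : Set (Perm (Fin n)))
    (len n) (Set.toFinite _) ⟨1, one_mem _⟩
  refine ⟨w, hw, fun x hx ↦ ?_⟩
  induction hx using parab_induction with
  | one => rw [len_one, inv_one, one_mul, zero_add]
  | s_mul i hi x _ hlen ih =>
    have hle := hmax (s n i * w) (mul_mem (s_mem_parab hi) hw)
    have hcases := len_s_mul i w
    rcases len_lt_of_len_s_mul_mul_lt (i := i) (x := x) (v := x⁻¹ * w)
      (by rw [mul_inv_cancel_left]; omega) with h | h
    · omega
    · have hconj : x⁻¹ * s n i * x * (x⁻¹ * w) = (s n i * x)⁻¹ * w := by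
        rw [mul_inv_rev, s_inv, mul_assoc, mul_inv_cancel_left]
      have hle' := len_mul_le (s n i * x) ((s n i * x)⁻¹ * w)
      rw [mul_inv_cancel_left] at hle'
      rw [hconj] at h
      omega

/-- The longest element of the parabolic subgroup `W_J`. -/
def longest (n : ℕ) (J : Finset (Fin (n - 1))) : Perm (Fin n) :=
  (exists_longest J).choose

lemma longest_mem (J : Finset (Fin (n - 1))) : longest n J ∈ parab n J :=
  (exists_longest J).choose_spec.1

lemma len_longest (hx : x ∈ parab n J) :
    len n (longest n J) = len n x + len n (x⁻¹ * longest n J) :=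
  (exists_longest J).choose_spec.2 x hx

lemma len_le_len_longest (hx : x ∈ parab n J) : len n x ≤ len n (longest n J) := by
  have h := len_longest hx
  omega

lemma eq_longest_of_len_le (hx : x ∈ parab n J) (h : len n (longest n J) ≤ len n x) :
    x = longest n J := by
  have hlen := len_longest hx
  exact inv_mul_eq_one.1 (eq_one_of_len_eq_zero (by omega))

/-- The set `W^{J'} ∩ W_J` of shortest representatives for the cosets `W_{J'} \ W_J`. -/
def minReps (n : ℕ) (J' J : Finset (Fin (n - 1))) : Set (Perm (Fin n)) :=
  {x | x ∈ parab n J ∧ IsShort n J' x}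

lemma bijective_mul_minReps (hJ : J' ⊆ J) :
    Function.Bijective fun p : parab n J' × minReps n J' J ↦
      (⟨p.1 * p.2, mul_mem (parab_mono hJ p.1.2) p.2.2.1⟩ : parab n J) := by
  constructor
  · rintro ⟨⟨y, hy⟩, ⟨x, hx⟩⟩ ⟨⟨y', hy'⟩, ⟨x', hx'⟩⟩ h
    have h : y * x = y' * x' := congrArg Subtype.val h
    obtain rfl : x = x' := hx.2.eq_of_mul_eq hx'.2 hy hy' h
    obtain rfl : y = y' := mul_right_cancel h
    rfl
  · rintro ⟨z, hz⟩
    obtain ⟨y, hy, d, hd, rfl⟩ := exists_mul_isShort J' z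
    exact ⟨⟨⟨y, hy⟩, ⟨d, (mul_mem_cancel_left (parab_mono hJ hy)).1 hz, hd⟩⟩, rfl⟩

/-- `w₀` is the longest element `w^{J'}_J` of `W^{J'} ∩ W_J`. -/
structure IsLongestMinRep (n : ℕ) (J' J : Finset (Fin (n - 1))) (w₀ : Perm (Fin n)) : Prop where
  mem : w₀ ∈ minReps n J' J
  len_le : ∀ x ∈ minReps n J' J, len n x ≤ len n w₀

namespace IsLongestMinRep

variable {w₀ : Perm (Fin n)}

lemma longest_mul (h : IsLongestMinRep n J' J w₀) (hJ : J' ⊆ J) :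
    longest n J' * w₀ = longest n J := by
  obtain ⟨⟨⟨y, hy⟩, ⟨d, hd⟩⟩, hyd⟩ := (bijective_mul_minReps hJ).2 ⟨longest n J, longest_mem J⟩
  have hyd : y * d = longest n J := congrArg Subtype.val hyd
  refine eq_longest_of_len_le (mul_mem (parab_mono hJ (longest_mem J')) h.mem.1) ?_
  rw [← hyd, hd.2.len_mul hy, h.mem.2.len_mul (longest_mem J')]
  exact Nat.add_le_add (len_le_len_longest hy) (h.len_le d hd)

lemma len_longest_eq (h : IsLongestMinRep n J' J w₀) (hJ : J' ⊆ J) :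
    len n (longest n J) = len n (longest n J') + len n w₀ := by
  rw [← h.longest_mul hJ, h.mem.2.len_mul (longest_mem J')]

lemma len_lt (h : IsLongestMinRep n J' J w₀) (hJ : J' ⊆ J) (hx : x ∈ minReps n J' J)
    (hne : x ≠ w₀) : len n x < len n w₀ := by
  refine lt_of_le_of_ne (h.len_le x hx) fun hlen ↦ hne ?_
  have hx_eq : longest n J' * x = longest n J :=
    eq_longest_of_len_le (mul_mem (parab_mono hJ (longest_mem J')) hx.1) <| by
      rw [h.len_longest_eq hJ, hx.2.len_mul (longest_mem J'), hlen]
  exact mul_left_cancel (hx_eq.trans (h.longest_mul hJ).symm)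

end IsLongestMinRep

end Parabolic

/-! ### Scalars -/

section Scalars

open Polynomial

lemma q_ne_zero : q ≠ 0 := RatFunc.X_ne_zero

lemma transcendental_q : Transcendental ℤ q :=
  Transcendental.restrictScalars (RingHom.injective_int (algebraMap ℤ ℂ)) RatFunc.transcendental_X

lemma aeval_q_injective : Function.Injective (aeval q : ℤ[X] →ₐ[ℤ] K) :=
  transcendental_iff_injective.1 transcendental_q

lemma q_inv_ne_neg_q : q⁻¹ ≠ -q := by
  intro h
  have hroot : aeval q (X ^ 2 + 1 : ℤ[X]) = aeval q (0 : ℤ[X]) := by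
    have hmul : q * q⁻¹ = 1 := mul_inv_cancel₀ q_ne_zero
    rw [h] at hmul
    simp only [map_add, map_pow, aeval_X, map_one, map_zero]
    linear_combination -hmul
  simpa using congrArg (eval 0) (aeval_q_injective hroot)

lemma map_q_zpow {σ : K →+* K} (hσ : σ q = q⁻¹) (k : ℤ) : σ (q ^ k) = q ^ (-k) := by
  rw [map_zpow₀, hσ, inv_zpow']

/-- The subring `ℤ[q]` of `ℂ(q)`. -/
def intPoly : Subalgebra ℤ K := (aeval q : ℤ[X] →ₐ[ℤ] K).range

/-- The ideal `q ℤ[q]` of `ℤ[q]`, regarded as a `ℤ[q]`-submodule of `ℂ(q)`. -/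
def qIntPoly : Submodule intPoly K := Submodule.span intPoly {q}

lemma mem_qIntPoly {f : K} : f ∈ qIntPoly ↔ ∃ g : ℤ[X], q * aeval q g = f := by
  refine Submodule.mem_span_singleton.trans ⟨?_, ?_⟩
  · rintro ⟨⟨_, g, rfl⟩, rfl⟩
    exact ⟨g, mul_comm _ _⟩
  · rintro ⟨g, rfl⟩
    exact ⟨⟨_, g, rfl⟩, mul_comm _ _⟩

lemma q_pow_mem_intPoly (k : ℕ) : q ^ k ∈ intPoly := ⟨X ^ k, by simp⟩

/-- The exponents occurring in `f` are positive and those occurring in `σ f` are negative; on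
polynomials this is a comparison of the degrees of `F`, `F.reverse` and `X ^ F.natDegree * F`. -/
lemma eq_zero_of_mem_qIntPoly_of_fixed {σ : K →+* K} (hσ : σ q = q⁻¹) {f : K}
    (hf : f ∈ qIntPoly) (hfix : σ f = f) : f = 0 := by
  obtain ⟨g, hg⟩ := mem_qIntPoly.1 hf
  set F : ℤ[X] := X * g
  have hF : aeval q F = f := by rw [map_mul, aeval_X, hg]
  have hFinv : aeval q⁻¹ F = f := by
    rw [← hfix, ← hF, aeval_def, aeval_def, hom_eval₂, hσ]
    congr 1
    exact Subsingleton.elim _ _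
  have hrev : F.reverse = X ^ F.natDegree * F := aeval_q_injective <| by
    let _ : Invertible (q⁻¹ : K) := invertibleOfNonzero (inv_ne_zero q_ne_zero)
    have h := eval₂_reverse_mul_pow (algebraMap ℤ K) (q⁻¹ : K) F
    rw [invOf_eq_inv, inv_inv, ← aeval_def, ← aeval_def, hFinv, inv_pow,
      mul_inv_eq_iff_eq_mul₀ (pow_ne_zero _ q_ne_zero)] at h
    rw [h, map_mul, map_pow, aeval_X, hF, mul_comm]
  by_contra hne
  have hF0 : F ≠ 0 := fun h ↦ hne (by rw [← hF, h, map_zero])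
  have hdeg := reverse_natDegree_le F
  rw [hrev, natDegree_X_pow_mul _ hF0] at hdeg
  have hpos : F.natDegree = g.natDegree + 1 :=
    natDegree_X_mul fun h ↦ hF0 (by rw [show F = X * g from rfl, h, mul_zero])
  omega

variable {n : ℕ}

/-- The Poincaré polynomial `∑ q ^ (ℓ(w_J) - 2 ℓ(x))` of `W_J`, as a balanced Laurent polynomial. -/
def poincare (n : ℕ) (J : Finset (Fin (n - 1))) : K :=
  ∑ x : parab n J, q ^ ((len n (longest n J) : ℤ) - 2 * len n x)

lemma poincare_ne_zero (J : Finset (Fin (n - 1))) : poincare n J ≠ 0 := by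
  set F : ℤ[X] := ∑ x : parab n J, X ^ (2 * len n ((x : Perm (Fin n))⁻¹ * longest n J))
  have hF : aeval q F = q ^ (len n (longest n J) : ℤ) * poincare n J := by
    simp only [F, poincare, map_sum, map_pow, aeval_X, Finset.mul_sum, ← zpow_add₀ q_ne_zero]
    refine Finset.sum_congr rfl fun x _ ↦ ?_
    rw [← zpow_natCast]
    congr 1
    have hlen := len_longest x.2
    push_cast
    omega
  intro h
  rw [h, mul_zero, ← map_zero (aeval q : ℤ[X] →ₐ[ℤ] K)] at hF
  have heval := congrArg (eval 1) (aeval_q_injective hF)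
  simp [F, eval_finsetSum] at heval

lemma map_poincare {σ : K →+* K} (hσ : σ q = q⁻¹) (J : Finset (Fin (n - 1))) :
    σ (poincare n J) = poincare n J := by
  let e : parab n J ≃ parab n J :=
    (Equiv.inv _).trans (Equiv.mulRight ⟨longest n J, longest_mem J⟩)
  rw [poincare, map_sum, ← Equiv.sum_comp e]
  refine Finset.sum_congr rfl fun x _ ↦ ?_
  rw [map_q_zpow hσ]
  congr 1
  have hlen := len_longest x.2
  simp only [e, Equiv.trans_apply, Equiv.inv_apply, Equiv.coe_mulRight, Subgroup.coe_mul,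
    InvMemClass.coe_inv]
  omega

end Scalars

/-! ### Right modules -/

section RightModule

variable {A M : Type*} [Ring A] [AddCommGroup M]

/-- The right `A`-module structure, as a left module over `Aᵐᵒᵖ`, given by an action written as a
function `act m a`. -/
abbrev rightModule (act : M → A → M) (add_act : ∀ m m' a, act (m + m') a = act m a + act m' a)
    (act_add : ∀ m a b, act m (a + b) = act m a + act m b) (act_one : ∀ m, act m 1 = m)
    (act_mul : ∀ m a b, act m (a * b) = act (act m a) b) : Module Aᵐᵒᵖ M where
  smul a m := act m a.unop
  one_smul := act_one
  mul_smul a b m := act_mul m b.unop a.unop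
  smul_zero a := left_eq_add.1 ((congrArg (act · a.unop) (add_zero 0)).symm.trans (add_act 0 0 _))
  smul_add a m m' := add_act m m' a.unop
  add_smul a b m := act_add m a.unop b.unop
  zero_smul m := left_eq_add.1 ((congrArg (act m) (add_zero 0)).symm.trans (act_add m 0 0))

lemma rightSMul_sum {ι : Type*} [Module Aᵐᵒᵖ M] (t : Finset ι) (f : ι → A) (m : M) :
    m <• (∑ i ∈ t, f i) = ∑ i ∈ t, m <• f i := by
  rw [Finset.op_sum, Finset.sum_smul]

variable {R : Type*} [CommRing R] [Algebra R A] [Module R M] [Module Aᵐᵒᵖ M]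
  [IsScalarTower R Aᵐᵒᵖ M]

lemma smul_rightSMul (c : R) (m : M) (a : A) : (c • m) <• a = c • (m <• a) :=
  (smul_comm c (MulOpposite.op a) m).symm

lemma rightSMul_smul (c : R) (m : M) (a : A) : m <• (c • a) = c • (m <• a) := by
  rw [MulOpposite.op_smul, smul_assoc]

end RightModule

/-! ### The Hecke algebra and its symmetrizers -/

section Hecke

variable {n : ℕ} {A : Type*} [Ring A] [Algebra K A] {H : Perm (Fin n) → A}
  {J J' : Finset (Fin (n - 1))}

/-- `H` is a standard family of elements `H_w` of a `K`-algebra: it satisfies the defining relations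
of the Hecke algebra of `S_n`. -/
structure IsHecke (n : ℕ) {A : Type*} [Ring A] [Algebra K A] (H : Perm (Fin n) → A) : Prop where
  one : H 1 = 1
  mul_s_of_len : ∀ w i, len n (w * s n i) = len n w + 1 → H (w * s n i) = H w * H (s n i)
  quadratic : ∀ i, H (s n i) * H (s n i) = (q⁻¹ - q) • H (s n i) + 1

/-- The symmetrizer `∑ q ^ (ℓ(w_J) - ℓ(x)) H_x` of `W_J`, normalised to be bar-invariant. -/
def symmetrizer (n : ℕ) (H : Perm (Fin n) → A) (J : Finset (Fin (n - 1))) : A :=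
  ∑ x : parab n J, q ^ ((len n (longest n J) : ℤ) - len n x) • H x

/-- The symmetrizer `∑ q ^ (ℓ(w₀) - ℓ(x)) H_x` of `W^{J'} ∩ W_J`, whose longest element is `w₀`. -/
def relSymmetrizer (n : ℕ) (H : Perm (Fin n) → A) (J' J : Finset (Fin (n - 1)))
    (w₀ : Perm (Fin n)) : A :=
  ∑ x : minReps n J' J, q ^ ((len n w₀ : ℤ) - len n x) • H x

namespace IsHecke

lemma mul_of_len (h : IsHecke n H) {x y : Perm (Fin n)}
    (hlen : len n (x * y) = len n x + len n y) : H (x * y) = H x * H y := by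
  induction y using perm_induction_right with
  | one => rw [mul_one, h.one, mul_one]
  | mul_s y i hy ih =>
    have hle := len_mul_le x y
    have hcases := len_mul_s (x * y) i
    rw [← mul_assoc] at hlen ⊢
    rw [h.mul_s_of_len _ _ (by omega), ih (by omega), h.mul_s_of_len _ _ hy, mul_assoc]

lemma mul_s (h : IsHecke n H) (w : Perm (Fin n)) (i : Fin (n - 1)) :
    H w * H (s n i) =
      H (w * s n i) + (if len n w = len n (w * s n i) + 1 then q⁻¹ - q else 0) • H w := by
  split_ifs with hw
  · have hw' := h.mul_s_of_len (w * s n i) i (by rw [mul_s_mul_s, hw])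
    rw [mul_s_mul_s] at hw'
    nth_rewrite 1 [hw']
    rw [mul_assoc, h.quadratic, mul_add, mul_one, mul_smul_comm, ← hw', add_comm]
  · rw [zero_smul, add_zero, h.mul_s_of_len w i ((len_mul_s w i).resolve_right hw)]

lemma op (h : IsHecke n H) : IsHecke n fun w ↦ MulOpposite.op (H w⁻¹) where
  one := by rw [inv_one, h.one, MulOpposite.op_one]
  mul_s_of_len w i hw := by
    rw [mul_inv_rev, h.mul_of_len, MulOpposite.op_mul]
    rw [← mul_inv_rev, len_inv, hw, len_inv, len_inv, len_s, add_comm]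
  quadratic i := by
    rw [s_inv, ← MulOpposite.op_mul, h.quadratic, MulOpposite.op_add, MulOpposite.op_smul,
      MulOpposite.op_one]

lemma commute_of_forall_s (h : IsHecke n H) {i : Fin (n - 1)} (hi : i ∉ J)
    (hcomm : ∀ j ∈ J, s n i * s n j = s n j * s n i) {x : Perm (Fin n)} (hx : x ∈ parab n J) :
    Commute (H (s n i)) (H x) := by
  have hlen (j k : Fin (n - 1)) (hne : j ≠ k) :
      len n (s n j * s n k) = len n (s n j) + len n (s n k) := by
    have hcases := len_mul_s (s n j) k
    rw [len_s] at hcases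
    rw [len_s, len_s]
    refine hcases.resolve_right fun h ↦ hne (s_injective ?_)
    have hone : s n j * s n k = 1 := eq_one_of_len_eq_zero (by omega)
    exact (mul_eq_one_iff_eq_inv.1 hone).trans (s_inv k)
  induction hx using parab_induction with
  | one => rw [h.one]; exact Commute.one_right _
  | s_mul j hj x _ hx ih =>
    have hne : i ≠ j := fun hij ↦ hi (hij ▸ hj)
    have hs : Commute (H (s n i)) (H (s n j)) := by
      rw [commute_iff_eq, ← h.mul_of_len (hlen i j hne), ← h.mul_of_len (hlen j i hne.symm),
        hcomm j hj]
    rw [h.mul_of_len (by rw [hx, len_s, add_comm])]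
    exact hs.mul_right ih

lemma commute_symmetrizer (h : IsHecke n H) {i : Fin (n - 1)} (hi : i ∉ J)
    (hcomm : ∀ j ∈ J, s n i * s n j = s n j * s n i) :
    Commute (H (s n i)) (symmetrizer n H J) :=
  Commute.sum_right _ _ _ fun x _ ↦ (h.commute_of_forall_s hi hcomm x.2).smul_right _

lemma symmetrizer_mul_s (h : IsHecke n H) {i : Fin (n - 1)} (hi : i ∈ J) :
    symmetrizer n H J * H (s n i) = q⁻¹ • symmetrizer n H J := by
  let e : parab n J ≃ parab n J := Equiv.mulRight ⟨s n i, s_mem_parab hi⟩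
  have he (x : parab n J) : (e x : Perm (Fin n)) * s n i = x := mul_s_mul_s _ _
  simp only [symmetrizer, Finset.sum_mul, smul_mul_assoc, h.mul_s, smul_add, Finset.smul_sum,
    Finset.sum_add_distrib]
  rw [← Equiv.sum_comp e, ← Finset.sum_add_distrib]
  refine Finset.sum_congr rfl fun x _ ↦ ?_
  rw [he, smul_smul, smul_smul, ← add_smul]
  congr 1
  set L := (len n (longest n J) : ℤ)
  change q ^ (L - len n ((x : Perm (Fin n)) * s n i)) + _ = _
  rcases len_mul_s (x : Perm (Fin n)) i with hlen | hlen
  · rw [if_neg (by omega), hlen, mul_zero, add_zero, ← zpow_neg_one, ← zpow_add₀ q_ne_zero]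
    congr 1
    push_cast
    ring
  · have hstep : q ^ (L - len n ((x : Perm (Fin n)) * s n i)) = q * q ^ (L - len n x) := by
      rw [← zpow_one_add₀ q_ne_zero, hlen]
      congr 1
      push_cast
      ring
    rw [if_pos hlen, hstep]
    ring

lemma symmetrizer_op (H : Perm (Fin n) → A) (J : Finset (Fin (n - 1))) :
    symmetrizer n (fun w ↦ MulOpposite.op (H w⁻¹)) J = MulOpposite.op (symmetrizer n H J) := by
  rw [symmetrizer, ← Equiv.sum_comp (Equiv.inv _), symmetrizer, Finset.op_sum]
  simp only [Equiv.inv_apply, InvMemClass.coe_inv, inv_inv, len_inv, MulOpposite.op_smul]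

end IsHecke

section RightModule

variable {M : Type*} [AddCommGroup M] [Module K M] [Module Aᵐᵒᵖ M] [IsScalarTower K Aᵐᵒᵖ M] {m : M}

namespace IsHecke

lemma rightSMul_eq_pow_smul (h : IsHecke n H) {c : K}
    (hm : ∀ i ∈ J, m <• H (s n i) = c • m) {x : Perm (Fin n)} (hx : x ∈ parab n J) :
    m <• H x = c ^ len n x • m := by
  induction hx using parab_induction with
  | one => rw [h.one, MulOpposite.op_one, one_smul, len_one, pow_zero, one_smul]
  | s_mul i hi x _ hlen ih =>
    rw [h.mul_of_len (by rw [hlen, len_s, add_comm]), op_smul_mul, hm i hi, smul_rightSMul, ih,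
      smul_smul, hlen, pow_succ']

lemma exists_rightSMul_eq_smul (h : IsHecke n H)
    (hm : ∀ i ∈ J, ∃ c : K, m <• H (s n i) = c • m) {x : Perm (Fin n)} (hx : x ∈ parab n J) :
    ∃ c : K, m <• H x = c • m := by
  induction hx using parab_induction with
  | one => exact ⟨1, by rw [h.one, MulOpposite.op_one, one_smul, one_smul]⟩
  | s_mul i hi x _ hlen ih =>
    obtain ⟨c, hc⟩ := hm i hi
    obtain ⟨d, hd⟩ := ih
    refine ⟨c * d, ?_⟩
    rw [h.mul_of_len (by rw [hlen, len_s, add_comm]), op_smul_mul, hc, smul_rightSMul, hd,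
      smul_smul]

lemma rightSMul_symmetrizer (h : IsHecke n H) (hm : ∀ i ∈ J, m <• H (s n i) = q⁻¹ • m) :
    m <• symmetrizer n H J = poincare n J • m := by
  rw [symmetrizer, rightSMul_sum, poincare, Finset.sum_smul]
  refine Finset.sum_congr rfl fun x _ ↦ ?_
  rw [rightSMul_smul, h.rightSMul_eq_pow_smul hm x.2, smul_smul, inv_pow, ← zpow_natCast,
    ← zpow_neg, ← zpow_add₀ q_ne_zero]
  congr 2
  ring

end IsHecke

end RightModule

namespace IsHecke

lemma mul_symmetrizer (h : IsHecke n H) {x : Perm (Fin n)} (hx : x ∈ parab n J) :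
    H x * symmetrizer n H J = q⁻¹ ^ len n x • symmetrizer n H J := by
  have hop := h.op.rightSMul_eq_pow_smul (m := symmetrizer n (fun w ↦ MulOpposite.op (H w⁻¹)) J)
    (fun i hi ↦ h.op.symmetrizer_mul_s hi) (inv_mem hx)
  rw [symmetrizer_op, inv_inv, len_inv] at hop
  exact MulOpposite.op_injective hop

lemma symmetrizer_eq_mul (h : IsHecke n H) {w₀ : Perm (Fin n)} (hw₀ : IsLongestMinRep n J' J w₀)
    (hJ : J' ⊆ J) :
    symmetrizer n H J = symmetrizer n H J' * relSymmetrizer n H J' J w₀ := by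
  rw [symmetrizer, symmetrizer, relSymmetrizer, Finset.sum_mul_sum, ← Finset.sum_product',
    Finset.univ_product_univ, ← Function.Bijective.sum_comp (bijective_mul_minReps hJ)]
  refine Finset.sum_congr rfl fun p _ ↦ ?_
  have hlen := p.2.2.2.len_mul p.1.2
  rw [smul_mul_smul_comm, ← h.mul_of_len hlen, ← zpow_add₀ q_ne_zero, hlen, hw₀.len_longest_eq hJ]
  congr 2
  push_cast
  ring

end IsHecke

end Hecke

/-! ### The bar involution -/

section Bar

variable {n : ℕ} {A : Type*} [Ring A] [Algebra K A] {H : Perm (Fin n) → A}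
  {J : Finset (Fin (n - 1))} {σ : K →+* K} {bar : A →+* A}

/-- `bar` is the bar involution of the algebra with standard family `H`; it is semilinear with
respect to the bar involution `σ` of the scalars. -/
structure IsHeckeBar (n : ℕ) {A : Type*} [Ring A] [Algebra K A] (H : Perm (Fin n) → A)
    (σ : K →+* K) (bar : A →+* A) : Prop where
  scalar_q : σ q = q⁻¹
  map_smul : ∀ (c : K) (a : A), bar (c • a) = σ c • bar a
  mul_inv : ∀ w, bar (H w) * H w⁻¹ = 1

namespace IsHeckeBar

lemma bar_s (hb : IsHeckeBar n H σ bar) (h : IsHecke n H) (i : Fin (n - 1)) :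
    bar (H (s n i)) = H (s n i) - (q⁻¹ - q) • 1 := by
  have hinv : H (s n i) * (H (s n i) - (q⁻¹ - q) • 1) = 1 := by
    rw [mul_sub, h.quadratic, mul_smul_comm, mul_one, add_sub_cancel_left]
  have hbar := hb.mul_inv (s n i)
  rw [s_inv] at hbar
  exact left_inv_eq_right_inv hbar hinv

lemma bar_symmetrizer_mul_s (hb : IsHeckeBar n H σ bar) (h : IsHecke n H) {i : Fin (n - 1)}
    (hi : i ∈ J) :
    bar (symmetrizer n H J) * H (s n i) = q⁻¹ • bar (symmetrizer n H J) := by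
  have hbar := congrArg bar (h.symmetrizer_mul_s hi)
  rw [map_mul, hb.map_smul, map_inv₀, hb.scalar_q, inv_inv] at hbar
  have hinv := hb.mul_inv (s n i)
  rw [s_inv] at hinv
  rw [eq_inv_smul_iff₀ q_ne_zero, ← smul_mul_assoc, ← hbar, mul_assoc, hinv, mul_one]

lemma bar_mul_symmetrizer (hb : IsHeckeBar n H σ bar) (h : IsHecke n H) {x : Perm (Fin n)}
    (hx : x ∈ parab n J) :
    bar (H x) * symmetrizer n H J = q ^ len n x • symmetrizer n H J := by
  have hinv := h.mul_symmetrizer (inv_mem hx)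
  rw [len_inv, inv_pow, eq_inv_smul_iff₀ (pow_ne_zero _ q_ne_zero)] at hinv
  nth_rewrite 1 [← hinv]
  rw [mul_smul_comm, ← mul_assoc, hb.mul_inv, one_mul]

/-- Let `E` be the symmetrizer and `π` the Poincaré polynomial of `W_J`. Evaluating `bar E * E` once
on each side gives `π • bar E = bar π • E`, and `π` is bar-invariant and nonzero. -/
lemma bar_symmetrizer (hb : IsHeckeBar n H σ bar) (h : IsHecke n H) (J : Finset (Fin (n - 1))) :
    bar (symmetrizer n H J) = symmetrizer n H J := by
  have hleft : bar (symmetrizer n H J) * symmetrizer n H J =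
      poincare n J • bar (symmetrizer n H J) :=
    h.rightSMul_symmetrizer fun i hi ↦ hb.bar_symmetrizer_mul_s h hi
  have hright : bar (symmetrizer n H J) * symmetrizer n H J =
      poincare n J • symmetrizer n H J := by
    rw [← map_poincare hb.scalar_q, poincare, map_sum, Finset.sum_smul]
    nth_rewrite 1 [symmetrizer]
    rw [map_sum, Finset.sum_mul]
    refine Finset.sum_congr rfl fun x _ ↦ ?_
    rw [hb.map_smul, smul_mul_assoc, hb.bar_mul_symmetrizer h x.2, smul_smul,
      map_q_zpow hb.scalar_q, map_q_zpow hb.scalar_q, ← zpow_natCast, ← zpow_add₀ q_ne_zero]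
    congr 2
    ring
  exact smul_right_injective A (poincare_ne_zero J) (hleft.symm.trans hright)

lemma bar_sub_mem_span (hb : IsHeckeBar n H σ bar) (h : IsHecke n H) (w : Perm (Fin n)) :
    bar (H w) - H w ∈ Submodule.span K (H '' {y | len n y < len n w}) := by
  induction w using perm_induction_right with
  | one => rw [h.one, map_one, sub_self]; exact zero_mem _
  | mul_s w i hw ih =>
    set V := Submodule.span K (H '' {y | len n y < len n (w * s n i)})
    have mem {y : Perm (Fin n)} (hy : len n y < len n (w * s n i)) : H y ∈ V :=
      Submodule.subset_span ⟨y, hy, rfl⟩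
    have hle : Submodule.span K (H '' {y | len n y < len n w}) ≤ V :=
      Submodule.span_mono <| Set.image_mono fun y (hy : len n y < len n w) ↦
        show len n y < len n (w * s n i) by omega
    have hmul : (bar (H w) - H w) * H (s n i) ∈ V := by
      refine (Submodule.span_le (p := V.comap (LinearMap.mulRight K (H (s n i))))).2 ?_ ih
      rintro _ ⟨y, hy : len n y < len n w, rfl⟩
      have hcases := len_mul_s y i
      change H y * H (s n i) ∈ V
      rw [h.mul_s]
      exact add_mem (mem (by omega)) (V.smul_mem _ (mem (by omega)))
    have hexpand : bar (H (w * s n i)) - H (w * s n i) = (bar (H w) - H w) * H (s n i)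
        - (q⁻¹ - q) • (bar (H w) - H w) - (q⁻¹ - q) • H w := by
      rw [h.mul_s_of_len w i hw, map_mul, hb.bar_s h, mul_sub, mul_smul_comm, mul_one, smul_sub,
        sub_mul]
      abel
    rw [hexpand]
    exact sub_mem (sub_mem hmul (V.smul_mem _ (hle ih))) (V.smul_mem _ (mem (by omega)))

end IsHeckeBar

end Bar

/-! ### Unitriangular involutions and the lattice of the canonical basis -/

section Lattice

lemma eq_zero_of_unitriangular_of_fixed {R M ι α : Type*} [CommRing R] [AddCommGroup M]
    [Module R M] [LinearOrder α] {σ : R →+* R} (b : Module.Basis ι R M) (ℓ : ι → α)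
    {B : M →ₛₗ[σ] M} (hB : ∀ i, B (b i) - b i ∈ Submodule.span R (b '' {j | ℓ j < ℓ i}))
    {d : M} (hd : B d = d) (hfix : ∀ i, σ (b.repr d i) = b.repr d i → b.repr d i = 0) :
    d = 0 := by
  by_contra hne
  have hsupp : (b.repr d).support.Nonempty := by simpa using hne
  obtain ⟨i, hi, hmax⟩ := Finset.exists_max_image _ ℓ hsupp
  have hdiag (j : ι) (hj : j ∈ (b.repr d).support) : b.repr (B (b j)) i = b.repr (b j) i := by
    have hsub := b.mem_span_image.1 (hB j)
    by_contra h
    have hlt : ℓ i < ℓ j := hsub (by simpa [sub_eq_zero] using h)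
    exact (hmax j hj).not_gt hlt
  have hrepr : b.repr d i = σ (b.repr d i) := by
    nth_rewrite 1 [← hd, ← b.linearCombination_repr d]
    rw [Finsupp.linearCombination_apply, Finsupp.sum, map_sum, map_sum, Finsupp.finsetSum_apply,
      Finset.sum_eq_single_of_mem i hi]
    · rw [map_smulₛₗ, map_smul, Finsupp.smul_apply, hdiag i hi, Module.Basis.repr_self,
        Finsupp.single_eq_same, smul_eq_mul, mul_one]
    · intro j hj hji
      rw [map_smulₛₗ, map_smul, Finsupp.smul_apply, hdiag j hj, Module.Basis.repr_self,
        Finsupp.single_eq_of_ne hji.symm, smul_zero]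
  exact Finsupp.mem_support_iff.1 hi (hfix i hrepr.symm)

variable {ι M : Type*} [AddCommGroup M] [Module K M]

/-- The `ℤ[q]`-lattice `∑ q ℤ[q] N_w`, `w ∈ S`. -/
def qLattice (N : ι → M) (S : Set ι) : Submodule intPoly M :=
  Submodule.span intPoly ((fun w ↦ q • N w) '' S)

lemma q_pow_smul_mem_qLattice {N : ι → M} {S : Set ι} {w : ι} (hw : w ∈ S) {k : ℕ} (hk : 0 < k) :
    q ^ k • N w ∈ qLattice N S := by
  obtain ⟨k, rfl⟩ := Nat.exists_eq_succ_of_ne_zero hk.ne'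
  rw [pow_succ, mul_smul]
  exact (qLattice N S).smul_mem ⟨q ^ k, q_pow_mem_intPoly k⟩ (Submodule.subset_span ⟨w, hw, rfl⟩)

lemma repr_mem_qIntPoly_of_mem_qLattice {N : ι → M} {S : Set ι} (b : Module.Basis S K M)
    (hb : ∀ w : S, b w = N w) {d : M} (hd : d ∈ qLattice N S) (u : S) :
    b.repr d u ∈ qIntPoly := by
  refine (Submodule.span_le (p := qIntPoly.comap ((b.coord u).restrictScalars intPoly))).2 ?_ hd
  rintro _ ⟨w, hw, rfl⟩
  change b.repr (q • N w) u ∈ qIntPoly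
  rw [← hb ⟨w, hw⟩, map_smul, b.repr_self, Finsupp.smul_apply, Finsupp.single_apply]
  split_ifs
  · exact mem_qIntPoly.2 ⟨1, by simp⟩
  · rw [smul_zero]
    exact zero_mem _

end Lattice

section CanonicalBasis

variable {n : ℕ} {M : Type} [AddCommGroup M] [Module K M] {short : Perm (Fin n) → Prop}
  {N C : Perm (Fin n) → M} {B : M → M} {w : Perm (Fin n)}

lemma _root_.IsCanonBasis.bar_eq (hC : IsCanonBasis n short N B C) (hw : short w) :
    B (C w) = C w :=
  (hC w hw).1

lemma _root_.IsCanonBasis.sub_mem_qLattice (hC : IsCanonBasis n short N B C) (hw : short w) :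
    C w - N w ∈ qLattice N {u | short u} := by
  obtain ⟨-, R, hR, hCw⟩ := hC w hw
  rw [hCw, add_sub_cancel_left]
  refine sum_mem fun u _ ↦ ?_
  by_cases hu : short u
  · rw [mul_comm, mul_smul]
    exact (qLattice N _).smul_mem ⟨_, R u, rfl⟩ (Submodule.subset_span ⟨u, hu, rfl⟩)
  · rw [hR u fun h ↦ hu h.1, map_zero, mul_zero, zero_smul]
    exact zero_mem _

end CanonicalBasis

/-! ### Mixed induced modules -/

section MixedInduced

variable {n : ℕ} {A : Type*} [Ring A] [Algebra K A] {H : Perm (Fin n) → A}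
  {P Q : Finset (Fin (n - 1))} {σ : K →+* K} {bar : A →+* A}
  {M' : Type*} [AddCommGroup M'] [Module K M'] [Module Aᵐᵒᵖ M']
  {M : Type*} [AddCommGroup M] [Module K M] [Module Aᵐᵒᵖ M] {N : Perm (Fin n) → M}

/-- `N` is the standard basis of the mixed induced module: `N 1` spans a copy of `sgn_P ⊠ trv_Q`,
and the `N w = N 1 · H w` for shortest coset representatives `w` form a `K`-basis. The value `N w`
at any other permutation `w` is a scalar multiple of an element of this basis. -/
structure IsMixedInduced (n : ℕ) {A : Type*} [Ring A] [Algebra K A] (H : Perm (Fin n) → A)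
    (P Q : Finset (Fin (n - 1))) {M : Type*} [AddCommGroup M] [Module K M] [Module Aᵐᵒᵖ M]
    (N : Perm (Fin n) → M) : Prop where
  eq_rightSMul : ∀ w, N w = N 1 <• H w
  sgn : ∀ i ∈ P, N 1 <• H (s n i) = (-q) • N 1
  trv : ∀ i ∈ Q, N 1 <• H (s n i) = q⁻¹ • N 1
  linearIndependent : LinearIndependent K fun w : {w | IsShort n (P ∪ Q) w} ↦ N w
  span_eq_top : Submodule.span K (N '' {w | IsShort n (P ∪ Q) w}) = ⊤

namespace IsMixedInduced

/-- The standard basis, indexed by the shortest coset representatives. -/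
def basis (hN : IsMixedInduced n H P Q N) : Module.Basis {w | IsShort n (P ∪ Q) w} K M :=
  Module.Basis.mk hN.linearIndependent (by rw [← Set.image_eq_range, hN.span_eq_top])

lemma basis_apply (hN : IsMixedInduced n H P Q N) (w : {w | IsShort n (P ∪ Q) w}) :
    hN.basis w = N w :=
  Module.Basis.mk_apply _ _ w

/-- On a common index `i` the generator `H_i` would act on `N 1` both by `-q` and by `q⁻¹`. -/
lemma disjoint (hN : IsMixedInduced n H P Q N) : Disjoint P Q := by
  refine Finset.disjoint_left.2 fun i hiP hiQ ↦ q_inv_ne_neg_q ?_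
  have hne : N 1 ≠ 0 :=
    hN.linearIndependent.ne_zero ⟨1, fun _ _ ↦ by rw [len_one]; exact Nat.zero_le _⟩
  exact smul_left_injective K hne ((hN.trv i hiQ).symm.trans (hN.sgn i hiP))

lemma apply_mul (hN : IsMixedInduced n H P Q N) (h : IsHecke n H) {x w : Perm (Fin n)}
    (hlen : len n (x * w) = len n x + len n w) : N (x * w) = N x <• H w := by
  rw [hN.eq_rightSMul, h.mul_of_len hlen, op_smul_mul, ← hN.eq_rightSMul]

lemma exists_rightSMul_s_eq_smul (hN : IsMixedInduced n H P Q N) {i : Fin (n - 1)}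
    (hi : i ∈ P ∪ Q) : ∃ c : K, N 1 <• H (s n i) = c • N 1 :=
  (Finset.mem_union.1 hi).elim (fun h ↦ ⟨_, hN.sgn i h⟩) fun h ↦ ⟨_, hN.trv i h⟩

variable [IsScalarTower K Aᵐᵒᵖ M]

lemma exists_eq_smul (hN : IsMixedInduced n H P Q N) (h : IsHecke n H) (w : Perm (Fin n)) :
    ∃ d, IsShort n (P ∪ Q) d ∧ len n d ≤ len n w ∧ ∃ c : K, N w = c • N d := by
  obtain ⟨x, hx, d, hd, rfl⟩ := exists_mul_isShort (P ∪ Q) w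
  obtain ⟨c, hc⟩ := h.exists_rightSMul_eq_smul (fun i ↦ hN.exists_rightSMul_s_eq_smul) hx
  refine ⟨d, hd, by rw [hd.len_mul hx]; exact Nat.le_add_left _ _, c, ?_⟩
  rw [hN.apply_mul h (hd.len_mul hx), hN.eq_rightSMul x, hc, smul_rightSMul, ← hN.eq_rightSMul]

lemma rightSMul_surjective (hN : IsMixedInduced n H P Q N) :
    Function.Surjective fun a : A ↦ N 1 <• a := by
  intro m
  have hm : m ∈ Submodule.span K (N '' {w | IsShort n (P ∪ Q) w}) :=
    hN.span_eq_top ▸ Submodule.mem_top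
  induction hm using Submodule.span_induction with
  | mem _ hx =>
    obtain ⟨w, -, rfl⟩ := hx
    exact ⟨H w, (hN.eq_rightSMul w).symm⟩
  | zero => exact ⟨0, by simp only [MulOpposite.op_zero, zero_smul]⟩
  | add _ _ _ _ hx hy =>
    obtain ⟨a, rfl⟩ := hx
    obtain ⟨b, rfl⟩ := hy
    exact ⟨a + b, by simp only [MulOpposite.op_add, add_smul]⟩
  | smul c _ _ hx =>
    obtain ⟨a, rfl⟩ := hx
    exact ⟨c • a, rightSMul_smul c _ a⟩

section BarInvolution

variable {B : M →ₛₗ[σ] M}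

lemma bar_apply_sub_mem_span (hN : IsMixedInduced n H P Q N) (h : IsHecke n H)
    (hb : IsHeckeBar n H σ bar) (hB : ∀ m (a : A), B (m <• a) = B m <• bar a)
    (hB_one : B (N 1) = N 1) (w : {w | IsShort n (P ∪ Q) w}) :
    B (hN.basis w) - hN.basis w ∈
      Submodule.span K (hN.basis '' {u | len n (u : Perm (Fin n)) < len n (w : Perm (Fin n))}) := by
  obtain ⟨w, hw⟩ := w
  set V := Submodule.span K (hN.basis '' {u | len n (u : Perm (Fin n)) < len n w})
  have hact (a : A) (ha : a ∈ Submodule.span K (H '' {y | len n y < len n w})) :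
      N 1 <• a ∈ V := by
    induction ha using Submodule.span_induction with
    | mem _ hx =>
      obtain ⟨y, hy : len n y < len n w, rfl⟩ := hx
      obtain ⟨d, hd, hdy, c, hc⟩ := hN.exists_eq_smul h y
      rw [← hN.eq_rightSMul, hc, ← hN.basis_apply ⟨d, hd⟩]
      exact V.smul_mem c (Submodule.subset_span ⟨⟨d, hd⟩, hdy.trans_lt hy, rfl⟩)
    | zero => simp only [MulOpposite.op_zero, zero_smul, zero_mem]
    | add _ _ _ _ hx hy => simpa only [MulOpposite.op_add, add_smul] using add_mem hx hy
    | smul c _ _ hx => simpa only [rightSMul_smul] using V.smul_mem c hx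
  have hsub : B (hN.basis ⟨w, hw⟩) - hN.basis ⟨w, hw⟩ = N 1 <• (bar (H w) - H w) := by
    rw [hN.basis_apply, hN.eq_rightSMul w, hB, hB_one, MulOpposite.op_sub, sub_smul]
  rw [hsub]
  exact hact _ (hb.bar_sub_mem_span h w)

lemma eq_zero_of_mem_qLattice (hN : IsMixedInduced n H P Q N) (h : IsHecke n H)
    (hb : IsHeckeBar n H σ bar) (hB : ∀ m (a : A), B (m <• a) = B m <• bar a)
    (hB_one : B (N 1) = N 1) {d : M} (hd : d ∈ qLattice N {w | IsShort n (P ∪ Q) w})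
    (hfix : B d = d) : d = 0 :=
  eq_zero_of_unitriangular_of_fixed hN.basis (fun w ↦ len n (w : Perm (Fin n)))
    (hN.bar_apply_sub_mem_span h hb hB hB_one) hfix fun u ↦
    eq_zero_of_mem_qIntPoly_of_fixed hb.scalar_q
      (repr_mem_qIntPoly_of_mem_qLattice hN.basis hN.basis_apply hd u)

lemma apply_bar {B' : M' →ₛₗ[σ] M'} {φ : M →ₗ[Aᵐᵒᵖ] M'} (hN : IsMixedInduced n H P Q N)
    (hB : ∀ m (a : A), B (m <• a) = B m <• bar a) (hB_one : B (N 1) = N 1)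
    (hB' : ∀ m (a : A), B' (m <• a) = B' m <• bar a) (hφ : B' (φ (N 1)) = φ (N 1)) (m : M) :
    φ (B m) = B' (φ m) := by
  obtain ⟨a, rfl⟩ := hN.rightSMul_surjective m
  dsimp only
  rw [hB, hB_one, map_smul, map_smul, hB', hφ]

end BarInvolution

/-- Applying the scalar by which `W_{P ∪ Q}` acts to the vector `(N 1, v)` of `M × M'` shows that it
is the same on `N 1` and on `v`; so the linear extension of `N w ↦ v · H w`, a priori for shortest
`w`, has these values at all permutations `w`. -/
lemma exists_linearMap_apply_eq [IsScalarTower K Aᵐᵒᵖ M'] (hN : IsMixedInduced n H P Q N)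
    (h : IsHecke n H) {v : M'} (hP : ∀ i ∈ P, v <• H (s n i) = (-q) • v)
    (hQ : ∀ i ∈ Q, v <• H (s n i) = q⁻¹ • v) :
    ∃ f : M →ₗ[K] M', ∀ w, f (N w) = v <• H w := by
  let f : M →ₗ[K] M' := hN.basis.constr K fun w ↦ v <• H w
  have hf_short {w : Perm (Fin n)} (hw : IsShort n (P ∪ Q) w) : f (N w) = v <• H w := by
    rw [← hN.basis_apply ⟨w, hw⟩, Module.Basis.constr_basis]
  refine ⟨f, fun w ↦ ?_⟩
  obtain ⟨x, hx, d, hd, rfl⟩ := exists_mul_isShort (P ∪ Q) w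
  obtain ⟨c, hc⟩ := h.exists_rightSMul_eq_smul (m := (N 1, v)) (fun i hi ↦
    (Finset.mem_union.1 hi).elim (fun hi ↦ ⟨-q, Prod.ext (hN.sgn i hi) (hP i hi)⟩)
      fun hi ↦ ⟨q⁻¹, Prod.ext (hN.trv i hi) (hQ i hi)⟩) hx
  have hcN : N 1 <• H x = c • N 1 := congrArg Prod.fst hc
  have hcv : v <• H x = c • v := congrArg Prod.snd hc
  rw [hN.apply_mul h (hd.len_mul hx), hN.eq_rightSMul x, hcN, smul_rightSMul,
    ← hN.eq_rightSMul, map_smul, hf_short hd, h.mul_of_len (hd.len_mul hx), op_smul_mul, hcv,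
    smul_rightSMul]

lemma exists_lift [IsScalarTower K Aᵐᵒᵖ M'] (hN : IsMixedInduced n H P Q N) (h : IsHecke n H)
    (hspan : Submodule.span K (Set.range H) = ⊤) {v : M'}
    (hP : ∀ i ∈ P, v <• H (s n i) = (-q) • v) (hQ : ∀ i ∈ Q, v <• H (s n i) = q⁻¹ • v) :
    ∃ φ : M →ₗ[Aᵐᵒᵖ] M', φ (N 1) = v := by
  obtain ⟨f, hf_N⟩ := hN.exists_linearMap_apply_eq h hP hQ
  have hf (a : A) : f (N 1 <• a) = v <• a := by
    have ha : a ∈ Submodule.span K (Set.range H) := hspan ▸ Submodule.mem_top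
    induction ha using Submodule.span_induction with
    | mem _ hx =>
      obtain ⟨w, rfl⟩ := hx
      rw [← hN.eq_rightSMul, hf_N]
    | zero => simp only [MulOpposite.op_zero, zero_smul, map_zero]
    | add _ _ _ _ hx hy => simp only [MulOpposite.op_add, add_smul, map_add, hx, hy]
    | smul c _ _ hx => rw [rightSMul_smul, map_smul, hx, rightSMul_smul]
  refine ⟨{ toFun := f, map_add' := map_add f, map_smul' := fun a m ↦ ?_ }, ?_⟩
  · obtain ⟨b, rfl⟩ := hN.rightSMul_surjective m
    rw [RingHom.id_apply, hf, smul_smul, smul_smul]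
    exact hf (b * a.unop)
  · have hone := hf 1
    rwa [MulOpposite.op_one, one_smul, one_smul] at hone

end IsMixedInduced

end MixedInduced

/-! ### The inclusion -/

section Inclusion

variable {n : ℕ} {A : Type*} [Ring A] [Algebra K A] {H : Perm (Fin n) → A}
  {P Q Q' : Finset (Fin (n - 1))} {w₀ w x : Perm (Fin n)} {σ : K →+* K} {bar : A →+* A}
  {M' : Type*} [AddCommGroup M'] [Module K M'] [Module Aᵐᵒᵖ M'] [IsScalarTower K Aᵐᵒᵖ M']
  {N' : Perm (Fin n) → M'} {B' : M' →ₛₗ[σ] M'}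

lemma isShort_mul_of_mem_minReps (hd : Disjoint P Q) (hQ : Q' ⊆ Q) (hx : x ∈ minReps n Q' Q)
    (hw : IsShort n (P ∪ Q) w) : IsShort n (P ∪ Q') (x * w) :=
  hw.mul (Finset.union_subset_union_right hQ) (parab_mono Finset.subset_union_right hx.1)
    (isShort_union_iff.2 ⟨isShort_of_disjoint hd hx.1, hx.2⟩)

namespace IsMixedInduced

lemma poincare_smul_rightSMul_relSymmetrizer (hN' : IsMixedInduced n H P Q' N') (h : IsHecke n H)
    (hw₀ : IsLongestMinRep n Q' Q w₀) (hQ : Q' ⊆ Q) :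
    poincare n Q' • (N' 1 <• relSymmetrizer n H Q' Q w₀) = N' 1 <• symmetrizer n H Q := by
  rw [h.symmetrizer_eq_mul hw₀ hQ, op_smul_mul, h.rightSMul_symmetrizer hN'.trv, smul_rightSMul]

lemma sgn_relSymmetrizer (hN' : IsMixedInduced n H P Q' N') (h : IsHecke n H)
    (hw₀ : IsLongestMinRep n Q' Q w₀) (hQ : Q' ⊆ Q) (hd : Disjoint P Q)
    (hPQ : ∀ i ∈ P, ∀ j ∈ Q, s n i * s n j = s n j * s n i) {i : Fin (n - 1)} (hi : i ∈ P) :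
    (N' 1 <• relSymmetrizer n H Q' Q w₀) <• H (s n i) =
      (-q) • (N' 1 <• relSymmetrizer n H Q' Q w₀) := by
  apply smul_right_injective M' (poincare_ne_zero Q')
  have hcomm := h.commute_symmetrizer (Finset.disjoint_left.1 hd hi) (hPQ i hi)
  dsimp only
  rw [← smul_rightSMul, smul_comm (poincare n Q') (-q),
    hN'.poincare_smul_rightSMul_relSymmetrizer h hw₀ hQ, ← op_smul_mul, ← hcomm.eq, op_smul_mul,
    hN'.sgn i hi, smul_rightSMul]

lemma trv_relSymmetrizer (hN' : IsMixedInduced n H P Q' N') (h : IsHecke n H)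
    (hw₀ : IsLongestMinRep n Q' Q w₀) (hQ : Q' ⊆ Q) {i : Fin (n - 1)} (hi : i ∈ Q) :
    (N' 1 <• relSymmetrizer n H Q' Q w₀) <• H (s n i) =
      q⁻¹ • (N' 1 <• relSymmetrizer n H Q' Q w₀) := by
  apply smul_right_injective M' (poincare_ne_zero Q')
  dsimp only
  rw [← smul_rightSMul, smul_comm (poincare n Q') q⁻¹,
    hN'.poincare_smul_rightSMul_relSymmetrizer h hw₀ hQ, ← op_smul_mul, h.symmetrizer_mul_s hi,
    rightSMul_smul]

lemma bar_rightSMul_relSymmetrizer (hN' : IsMixedInduced n H P Q' N') (h : IsHecke n H)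
    (hb : IsHeckeBar n H σ bar) (hB' : ∀ m (a : A), B' (m <• a) = B' m <• bar a)
    (hB'_one : B' (N' 1) = N' 1) (hw₀ : IsLongestMinRep n Q' Q w₀) (hQ : Q' ⊆ Q) :
    B' (N' 1 <• relSymmetrizer n H Q' Q w₀) = N' 1 <• relSymmetrizer n H Q' Q w₀ := by
  apply smul_right_injective M' (poincare_ne_zero Q')
  dsimp only
  nth_rewrite 1 [← map_poincare hb.scalar_q]
  rw [← map_smulₛₗ, hN'.poincare_smul_rightSMul_relSymmetrizer h hw₀ hQ, hB', hB'_one,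
    hb.bar_symmetrizer h]

lemma relSymmetrizer_rightSMul (hN' : IsMixedInduced n H P Q' N') (h : IsHecke n H)
    (hw : IsShort n Q w) :
    (N' 1 <• relSymmetrizer n H Q' Q w₀) <• H w =
      ∑ x : minReps n Q' Q, q ^ ((len n w₀ : ℤ) - len n x) • N' (x * w) := by
  rw [relSymmetrizer, rightSMul_sum, Finset.smul_sum]
  refine Finset.sum_congr rfl fun x _ ↦ ?_
  rw [rightSMul_smul, smul_rightSMul, ← hN'.eq_rightSMul, hN'.apply_mul h (hw.len_mul x.2.1)]

variable {M : Type*} [AddCommGroup M] [Module K M] [Module Aᵐᵒᵖ M] {N : Perm (Fin n) → M}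
  {φ : M →ₗ[Aᵐᵒᵖ] M'}

lemma apply_eq_sum (hN : IsMixedInduced n H P Q N) (hN' : IsMixedInduced n H P Q' N')
    (h : IsHecke n H) (hφ : φ (N 1) = N' 1 <• relSymmetrizer n H Q' Q w₀)
    (hw : IsShort n (P ∪ Q) w) :
    φ (N w) = ∑ x : minReps n Q' Q, q ^ ((len n w₀ : ℤ) - len n x) • N' (x * w) := by
  rw [hN.eq_rightSMul w, map_smul, hφ,
    hN'.relSymmetrizer_rightSMul h (isShort_union_iff.1 hw).2]

lemma apply_sub_mem_qLattice (hN : IsMixedInduced n H P Q N) (hN' : IsMixedInduced n H P Q' N')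
    (h : IsHecke n H) (hw₀ : IsLongestMinRep n Q' Q w₀) (hQ : Q' ⊆ Q)
    (hφ : φ (N 1) = N' 1 <• relSymmetrizer n H Q' Q w₀) (hw : IsShort n (P ∪ Q) w) :
    φ (N w) - N' (w₀ * w) ∈ qLattice N' {u | IsShort n (P ∪ Q') u} := by
  rw [hN.apply_eq_sum hN' h hφ hw, Fintype.sum_eq_add_sum_compl ⟨w₀, hw₀.mem⟩, sub_self, zpow_zero,
    one_smul, add_sub_cancel_left]
  refine sum_mem fun x hx ↦ ?_
  have hlt := hw₀.len_lt hQ x.2 fun heq ↦ by simp [← heq] at hx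
  rw [← Nat.cast_sub hlt.le, zpow_natCast]
  exact q_pow_smul_mem_qLattice (isShort_mul_of_mem_minReps hN.disjoint hQ x.2 hw)
    (Nat.sub_pos_of_lt hlt)

variable [IsScalarTower K Aᵐᵒᵖ M]

lemma repr_apply (hN : IsMixedInduced n H P Q N) (hN' : IsMixedInduced n H P Q' N')
    (h : IsHecke n H) (hw₀ : IsLongestMinRep n Q' Q w₀) (hQ : Q' ⊆ Q)
    (hφ : φ (N 1) = N' 1 <• relSymmetrizer n H Q' Q w₀) (m : M)
    (u : {w | IsShort n (P ∪ Q) w}) :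
    hN'.basis.repr (φ m) ⟨w₀ * u, isShort_mul_of_mem_minReps hN.disjoint hQ hw₀.mem u.2⟩ =
      hN.basis.repr m u := by
  set u' : {w | IsShort n (P ∪ Q') w} := ⟨w₀ * u, _⟩
  suffices hN'.basis.coord u' ∘ₗ φ.restrictScalars K = hN.basis.coord u from
    LinearMap.congr_fun this m
  refine hN.basis.ext fun w ↦ ?_
  let mulLeft (x : minReps n Q' Q) : {w | IsShort n (P ∪ Q') w} :=
    ⟨x * w, isShort_mul_of_mem_minReps hN.disjoint hQ x.2 w.2⟩
  have hrepr (x : minReps n Q' Q) : hN'.basis.repr (N' (x * w)) u' =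
      Finsupp.single (mulLeft x) 1 u' := by
    rw [← hN'.basis_apply (mulLeft x), Module.Basis.repr_self]
  have hne (x : minReps n Q' Q) (hx : x ≠ ⟨w₀, hw₀.mem⟩) : mulLeft x ≠ u' := fun heq ↦ by
    have hxw : x * (w : Perm (Fin n)) = w₀ * u := congrArg Subtype.val heq
    have hwu := w.2.eq_of_mul_eq u.2 (parab_mono Finset.subset_union_right x.2.1)
      (parab_mono Finset.subset_union_right hw₀.mem.1) hxw
    exact hx (Subtype.ext (mul_right_cancel (hwu ▸ hxw)))
  have hiff : mulLeft ⟨w₀, hw₀.mem⟩ = u' ↔ w = u := by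
    simp only [mulLeft, u', Subtype.ext_iff, mul_right_inj]
  rw [LinearMap.comp_apply, LinearMap.restrictScalars_apply, hN.basis_apply,
    hN.apply_eq_sum hN' h hφ w.2, map_sum, Fintype.sum_eq_single ⟨w₀, hw₀.mem⟩]
  · rw [sub_self, zpow_zero, one_smul, Module.Basis.coord_apply, hrepr ⟨w₀, hw₀.mem⟩,
      Finsupp.single_apply, ← hN.basis_apply, Module.Basis.coord_apply, Module.Basis.repr_self,
      Finsupp.single_apply]
    exact if_congr hiff rfl rfl
  · intro x hx
    rw [map_smul, Module.Basis.coord_apply, hrepr, Finsupp.single_eq_of_ne (hne x hx).symm,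
      smul_zero]

lemma injective_of_apply_one (hN : IsMixedInduced n H P Q N) (hN' : IsMixedInduced n H P Q' N')
    (h : IsHecke n H) (hw₀ : IsLongestMinRep n Q' Q w₀) (hQ : Q' ⊆ Q)
    (hφ : φ (N 1) = N' 1 <• relSymmetrizer n H Q' Q w₀) : Function.Injective φ := by
  intro m m' hm
  refine hN.basis.ext_elem fun u ↦ ?_
  rw [← hN.repr_apply hN' h hw₀ hQ hφ, hm, hN.repr_apply hN' h hw₀ hQ hφ]

lemma apply_mem_qLattice (hN : IsMixedInduced n H P Q N) (hN' : IsMixedInduced n H P Q' N')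
    (h : IsHecke n H) (hw₀ : IsLongestMinRep n Q' Q w₀) (hQ : Q' ⊆ Q)
    (hφ : φ (N 1) = N' 1 <• relSymmetrizer n H Q' Q w₀) {d : M}
    (hd : d ∈ qLattice N {u | IsShort n (P ∪ Q) u}) :
    φ d ∈ qLattice N' {u | IsShort n (P ∪ Q') u} := by
  refine (Submodule.span_le (p := (qLattice N' {u | IsShort n (P ∪ Q') u}).comap
    ((φ.restrictScalars K).restrictScalars intPoly))).2 ?_ hd
  rintro _ ⟨w, hw, rfl⟩
  change φ.restrictScalars K (q • N w) ∈ qLattice N' {u | IsShort n (P ∪ Q') u}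
  have hq : q ∈ intPoly := by simpa only [pow_one] using q_pow_mem_intPoly 1
  rw [map_smul, ← sub_add_cancel (φ.restrictScalars K (N w)) (N' (w₀ * w)), smul_add]
  exact add_mem ((qLattice N' _).smul_mem ⟨q, hq⟩ (hN.apply_sub_mem_qLattice hN' h hw₀ hQ hφ hw))
    (Submodule.subset_span ⟨_, isShort_mul_of_mem_minReps hN.disjoint hQ hw₀.mem hw, rfl⟩)

lemma apply_canonicalBasis {M M' : Type} [AddCommGroup M] [Module K M] [Module Aᵐᵒᵖ M]
    [IsScalarTower K Aᵐᵒᵖ M] [AddCommGroup M'] [Module K M'] [Module Aᵐᵒᵖ M']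
    [IsScalarTower K Aᵐᵒᵖ M'] {N C : Perm (Fin n) → M} {N' C' : Perm (Fin n) → M'}
    {B : M →ₛₗ[σ] M} {B' : M' →ₛₗ[σ] M'} {φ : M →ₗ[Aᵐᵒᵖ] M'}
    (hN : IsMixedInduced n H P Q N) (hN' : IsMixedInduced n H P Q' N') (h : IsHecke n H)
    (hb : IsHeckeBar n H σ bar) (hB' : ∀ m (a : A), B' (m <• a) = B' m <• bar a)
    (hB'_one : B' (N' 1) = N' 1) (hw₀ : IsLongestMinRep n Q' Q w₀) (hQ : Q' ⊆ Q)
    (hφ : φ (N 1) = N' 1 <• relSymmetrizer n H Q' Q w₀) (hφB : ∀ m, φ (B m) = B' (φ m))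
    (hC : IsCanonBasis n (IsShort n (P ∪ Q)) N B C)
    (hC' : IsCanonBasis n (IsShort n (P ∪ Q')) N' B' C') (hw : IsShort n (P ∪ Q) w) :
    φ (C w) = C' (w₀ * w) := by
  have hw' : IsShort n (P ∪ Q') (w₀ * w) :=
    isShort_mul_of_mem_minReps hN.disjoint hQ hw₀.mem hw
  have hmem : φ (C w) - C' (w₀ * w) ∈ qLattice N' {u | IsShort n (P ∪ Q') u} := by
    have hsplit : φ (C w) - C' (w₀ * w) =
        φ (C w - N w) + (φ (N w) - N' (w₀ * w)) - (C' (w₀ * w) - N' (w₀ * w)) := by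
      rw [map_sub]
      abel
    rw [hsplit]
    exact sub_mem (add_mem (hN.apply_mem_qLattice hN' h hw₀ hQ hφ (hC.sub_mem_qLattice hw))
      (hN.apply_sub_mem_qLattice hN' h hw₀ hQ hφ hw)) (hC'.sub_mem_qLattice hw')
  have hfix : B' (φ (C w) - C' (w₀ * w)) = φ (C w) - C' (w₀ * w) := by
    rw [map_sub, ← hφB, hC.bar_eq hw, hC'.bar_eq hw']
  exact sub_eq_zero.1 (hN'.eq_zero_of_mem_qLattice h hb hB' hB'_one hmem hfix)

end IsMixedInduced

end Inclusion

end MixedHecke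

open MixedHecke
open scoped RightActions

theorem statement3_general {n : ℕ} {A : Type*} [Ring A] [Algebra K A] {H : Equiv.Perm (Fin n) → A}
    (h : IsHecke n H) (hspan : Submodule.span K (Set.range H) = ⊤) {σ : K →+* K} {bar : A →+* A}
    (hb : IsHeckeBar n H σ bar) {P Q Q' : Finset (Fin (n - 1))}
    (hPQ : ∀ i ∈ P, ∀ j ∈ Q, s n i * s n j = s n j * s n i) (hQ : Q' ⊆ Q)
    {M : Type} [AddCommGroup M] [Module K M] [Module Aᵐᵒᵖ M] [IsScalarTower K Aᵐᵒᵖ M]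
    {N : Equiv.Perm (Fin n) → M} (hN : IsMixedInduced n H P Q N) {B : M →ₛₗ[σ] M}
    (hB : ∀ m (a : A), B (m <• a) = B m <• bar a) (hB_one : B (N 1) = N 1)
    {M' : Type} [AddCommGroup M'] [Module K M'] [Module Aᵐᵒᵖ M'] [IsScalarTower K Aᵐᵒᵖ M']
    {N' : Equiv.Perm (Fin n) → M'} (hN' : IsMixedInduced n H P Q' N') {B' : M' →ₛₗ[σ] M'}
    (hB' : ∀ m (a : A), B' (m <• a) = B' m <• bar a) (hB'_one : B' (N' 1) = N' 1)
    {w₀ : Equiv.Perm (Fin n)} (hw₀ : IsLongestMinRep n Q' Q w₀) :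
    ∃ φ : M →ₗ[Aᵐᵒᵖ] M',
      (∀ w, IsShort n (P ∪ Q) w →
        φ (N w) = ∑ᶠ x ∈ minReps n Q' Q, q ^ ((len n w₀ : ℤ) - len n x) • N' (x * w)) ∧
      Function.Injective φ ∧
      (∀ m, φ (B m) = B' (φ m)) ∧
      ∀ C C', IsCanonBasis n (IsShort n (P ∪ Q)) N B C →
        IsCanonBasis n (IsShort n (P ∪ Q')) N' B' C' →
        ∀ w, IsShort n (P ∪ Q) w → φ (C w) = C' (w₀ * w) := by
  obtain ⟨φ, hφ⟩ := hN.exists_lift h hspan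
    (fun _ ↦ hN'.sgn_relSymmetrizer h hw₀ hQ hN.disjoint hPQ)
    fun _ ↦ hN'.trv_relSymmetrizer h hw₀ hQ
  have hφB : ∀ m, φ (B m) = B' (φ m) := hN.apply_bar hB hB_one hB' <| by
    rw [hφ, hN'.bar_rightSMul_relSymmetrizer h hb hB' hB'_one hw₀ hQ]
  refine ⟨φ, fun w hw ↦ ?_, hN.injective_of_apply_one hN' h hw₀ hQ hφ, hφB, fun _ _ hC hC' _ ↦
    hN.apply_canonicalBasis hN' h hb hB' hB'_one hw₀ hQ hφ hφB hC hC'⟩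
  rw [hN.apply_eq_sum hN' h hφ hw, ← finsum_set_coe_eq_finsum_mem, finsum_eq_sum_of_fintype]

theorem statement3 (n : ℕ) (A : Type) [Ring A] [Algebra K A]
    (H : Equiv.Perm (Fin n) → A)
    (hHLI : LinearIndependent K H)
    (hHspan : Submodule.span K (Set.range H) = ⊤)
    (hone : H 1 = 1)
    (hmul : ∀ (w : Equiv.Perm (Fin n)) (i : Fin (n - 1)),
      len n (w * s n i) = len n w + 1 → H (w * s n i) = H w * H (s n i))
    (hquad : ∀ i : Fin (n - 1),
      H (s n i) * H (s n i) = (q⁻¹ - q) • H (s n i) + 1)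
    (barK : K →+* K) (hbarKq : barK q = q⁻¹)
    (hbarKc : ∀ z : ℂ, barK (algebraMap ℂ K z) = algebraMap ℂ K z)
    (bar : A →+* A)
    (hbar_smul : ∀ (c : K) (x : A), bar (c • x) = barK c • bar x)
    (hbarH : ∀ w : Equiv.Perm (Fin n),
      bar (H w) * H w⁻¹ = 1 ∧ H w⁻¹ * bar (H w) = 1)
    (P Q Q' : Finset (Fin (n - 1)))
    (hPQ : ∀ i ∈ P, ∀ j ∈ Q, s n i * s n j = s n j * s n i)
    (hQ'Q : Q' ⊆ Q)
    -- the module M^p_q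
    (M : Type) [AddCommGroup M] [Module K M]
    (act : M → A → M)
    (hact_addlM : ∀ (m m' : M) (a : A), act (m + m') a = act m a + act m' a)
    (hact_addrM : ∀ (m : M) (a b : A), act m (a + b) = act m a + act m b)
    (hact_smullM : ∀ (c : K) (m : M) (a : A), act (c • m) a = c • act m a)
    (hact_smulrM : ∀ (c : K) (m : M) (a : A), act m (c • a) = c • act m a)
    (hact_oneM : ∀ m : M, act m 1 = m)
    (hact_mulM : ∀ (m : M) (a b : A), act m (a * b) = act (act m a) b)
    (N : Equiv.Perm (Fin n) → M)
    (hNM : ∀ w, N w = act (N 1) (H w))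
    (hgenPM : ∀ i ∈ P, act (N 1) (H (s n i)) = (-q) • N 1)
    (hgenQM : ∀ i ∈ Q, act (N 1) (H (s n i)) = q⁻¹ • N 1)
    (hNLIM : LinearIndependent K
      (fun w : {w : Equiv.Perm (Fin n) // IsShort n (P ∪ Q) w} => N w))
    (hNspanM : Submodule.span K (N '' {w | IsShort n (P ∪ Q) w}) = ⊤)
    (barM : M → M)
    (hbar_addM : ∀ m m' : M, barM (m + m') = barM m + barM m')
    (hbar_smulM : ∀ (c : K) (m : M), barM (c • m) = barK c • barM m)
    (hbar_actM : ∀ (m : M) (a : A), barM (act m a) = act (barM m) (bar a))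
    (hbar_oneM : barM (N 1) = N 1)
    -- the module M^p_{q'}
    (M' : Type) [AddCommGroup M'] [Module K M']
    (act' : M' → A → M')
    (hact_addlM' : ∀ (m m' : M') (a : A), act' (m + m') a = act' m a + act' m' a)
    (hact_addrM' : ∀ (m : M') (a b : A), act' m (a + b) = act' m a + act' m b)
    (hact_smullM' : ∀ (c : K) (m : M') (a : A), act' (c • m) a = c • act' m a)
    (hact_smulrM' : ∀ (c : K) (m : M') (a : A), act' m (c • a) = c • act' m a)
    (hact_oneM' : ∀ m : M', act' m 1 = m)
    (hact_mulM' : ∀ (m : M') (a b : A), act' m (a * b) = act' (act' m a) b)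
    (N' : Equiv.Perm (Fin n) → M')
    (hNM' : ∀ w, N' w = act' (N' 1) (H w))
    (hgenPM' : ∀ i ∈ P, act' (N' 1) (H (s n i)) = (-q) • N' 1)
    (hgenQM' : ∀ i ∈ Q', act' (N' 1) (H (s n i)) = q⁻¹ • N' 1)
    (hNLIM' : LinearIndependent K
      (fun w : {w : Equiv.Perm (Fin n) // IsShort n (P ∪ Q') w} => N' w))
    (hNspanM' : Submodule.span K (N' '' {w | IsShort n (P ∪ Q') w}) = ⊤)
    (barM' : M' → M')
    (hbar_addM' : ∀ m m' : M', barM' (m + m') = barM' m + barM' m')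
    (hbar_smulM' : ∀ (c : K) (m : M'), barM' (c • m) = barK c • barM' m)
    (hbar_actM' : ∀ (m : M') (a : A), barM' (act' m a) = act' (barM' m) (bar a))
    (hbar_oneM' : barM' (N' 1) = N' 1)
    -- the set W^{q'} ∩ W_q of shortest coset representatives for W_{q'}\W_q,
    -- and its longest element w₀ = w^{q'}_q
    (w₀ : Equiv.Perm (Fin n))
    (hw₀mem : w₀ ∈ parab n Q ∧ ∀ y ∈ parab n Q', len n w₀ ≤ len n (y * w₀))
    (hw₀long : ∀ x : Equiv.Perm (Fin n),
      (x ∈ parab n Q ∧ ∀ y ∈ parab n Q', len n x ≤ len n (y * x)) → len n x ≤ len n w₀) :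
    ∃ φ : M →ₗ[K] M',
      (∀ w, IsShort n (P ∪ Q) w →
        φ (N w) = ∑ᶠ x ∈ {x : Equiv.Perm (Fin n) |
            x ∈ parab n Q ∧ ∀ y ∈ parab n Q', len n x ≤ len n (y * x)},
          (q ^ ((len n w₀ : ℤ) - (len n x : ℤ))) • N' (x * w)) ∧
      Function.Injective φ ∧
      (∀ (m : M) (a : A), φ (act m a) = act' (φ m) a) ∧
      (∀ m : M, φ (barM m) = barM' (φ m)) ∧
      (∀ (C : Equiv.Perm (Fin n) → M) (C' : Equiv.Perm (Fin n) → M'),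
        IsCanonBasis n (IsShort n (P ∪ Q)) N barM C →
        IsCanonBasis n (IsShort n (P ∪ Q')) N' barM' C' →
        ∀ w, IsShort n (P ∪ Q) w → φ (C w) = C' (w₀ * w)) := by
  let _ := rightModule act hact_addlM hact_addrM hact_oneM hact_mulM
  let _ := rightModule act' hact_addlM' hact_addrM' hact_oneM' hact_mulM'
  have : IsScalarTower K Aᵐᵒᵖ M := ⟨fun c a m ↦ hact_smulrM c m a.unop⟩
  have : IsScalarTower K Aᵐᵒᵖ M' := ⟨fun c a m ↦ hact_smulrM' c m a.unop⟩
  obtain ⟨φ, hsum, hinj, hφB, hφC⟩ := statement3_general ⟨hone, hmul, hquad⟩ hHspan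
    ⟨hbarKq, hbar_smul, fun w ↦ (hbarH w).1⟩ hPQ hQ'Q
    (B := ⟨⟨barM, hbar_addM⟩, hbar_smulM⟩) (B' := ⟨⟨barM', hbar_addM'⟩, hbar_smulM'⟩)
    ⟨hNM, hgenPM, hgenQM, hNLIM, hNspanM⟩ hbar_actM hbar_oneM
    ⟨hNM', hgenPM', hgenQM', hNLIM', hNspanM'⟩ hbar_actM' hbar_oneM' ⟨hw₀mem, hw₀long⟩
  exact ⟨φ.restrictScalars K, hsum, hinj, fun m a ↦ φ.map_smul (MulOpposite.op a) m, hφB, hφC⟩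
end
end
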